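/- Let q = 3. If d = 2 and β ∈ (0,1), then γ(3,β,2,n) → 1 as n → ∞. If d ≥ 3 and 1 − 3/(d+1) ≤ β < 1, then γ(3,β,d,n) → 1 as n → ∞. -/

import Mathlib

open Filter

/-- Weight of a configuration of the `q`-state Potts model with parameter `β`
on the `d`-ary tree of height `n`.  A vertex of the tree is a pair of a depth
`k ≤ n` and a path of length `k`; the parent of a vertex of depth `k+1` is
obtained by dropping the last step of its path.  The weight is
`β ^ (number of monochromatic edges)`. -/
noncomputable def treeWeight (q d n : ℕ) (β : ℝ)
    (σ : (Σ k : Fin (n + 1), (Fin k → Fin d)) → Fin q) : ℝ :=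
  β ^ (Finset.univ.filter (fun p : Σ k : Fin n, (Fin (k + 1) → Fin d) =>
        σ ⟨p.1.succ, p.2⟩ = σ ⟨p.1.castSucc, fun i => p.2 i.castSucc⟩)).card

/-- The conditional probability, under the Gibbs distribution of the `q`-state
Potts model with parameter `β` on the `d`-ary tree `𝕋_{d,n}` of height `n`,
that the root receives colour `c` given that the leaves (the depth-`n`
vertices) are coloured according to `τ`. -/
noncomputable def condRootProb (q d n : ℕ) (β : ℝ)
    (τ : (Fin n → Fin d) → Fin q) (c : Fin q) : ℝ :=
  (∑ σ ∈ Finset.univ.filter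
      (fun σ : (Σ k : Fin (n + 1), (Fin k → Fin d)) → Fin q =>
        σ ⟨⟨0, n.succ_pos⟩, Fin.elim0⟩ = c ∧
          ∀ f : Fin n → Fin d, σ ⟨⟨n, n.lt_succ_self⟩, f⟩ = τ f),
      treeWeight q d n β σ) /
  (∑ σ ∈ Finset.univ.filter
      (fun σ : (Σ k : Fin (n + 1), (Fin k → Fin d)) → Fin q =>
        ∀ f : Fin n → Fin d, σ ⟨⟨n, n.lt_succ_self⟩, f⟩ = τ f),
      treeWeight q d n β σ)

/-- `γ(q,β,d,n)`: the maximum, over boundary configurations `τ` and colours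
`c₁, c₂`, of the ratio of conditional root marginals. -/
noncomputable def pottsGamma (q d : ℕ) (β : ℝ) (n : ℕ) : ℝ :=
  ⨆ τ : (Fin n → Fin d) → Fin q, ⨆ c₁ : Fin q, ⨆ c₂ : Fin q,
    condRootProb q d n β τ c₁ / condRootProb q d n β τ c₂

/-- The function `g_{c₁,c₂,β}` of the two-step recursion. -/
noncomputable def gfun (q d : ℕ) (β : ℝ) (c₁ c₂ : Fin q) (p : Fin d → Fin q → ℝ) : ℝ :=
  ∏ k : Fin d,
    (1 - ((1 - β) * (p k c₁ - p k c₂)) /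
      (β * p k c₂ + ∑ c ∈ Finset.univ.erase c₂, p k c))

/-- The function `h_{c₁,c₂,β}` of the two-step recursion. -/
noncomputable def hfun (q d : ℕ) (β : ℝ) (c₁ c₂ : Fin q) (p : Fin d → Fin q → ℝ) : ℝ :=
  1 + ((1 - β) * (1 - gfun q d β c₁ c₂ p)) /
    (β + ∑ c ∈ Finset.univ.erase c₂, gfun q d β c c₂ p)

/-- `Δ_α`: probability vectors on `q` colours whose entries are within a
factor `α` of each other. -/
def simplexAlpha (q : ℕ) (α : ℝ) : Set (Fin q → ℝ) :=
  {p | (∀ i, 0 ≤ p i) ∧ (∑ i, p i) = 1 ∧ ∀ i j, p i ≤ α * p j}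

/-- `M_{α,c₁,c₂,β}`: the maximum of `h_{c₁,c₂,β}` over `Δ_α^d`. -/
noncomputable def Mval (q d : ℕ) (α β : ℝ) (c₁ c₂ : Fin q) : ℝ :=
  sSup ((hfun q d β c₁ c₂) '' {p | ∀ k, p k ∈ simplexAlpha q α})

/-- `Ex_c(α)`: vectors with entries in `{1, α}`, whose `c`-entry is `1`
and with at least one entry equal to `α`. -/
def exSet (q : ℕ) (c : Fin q) (α : ℝ) : Set (Fin q → ℝ) :=
  {p | (∀ c', p c' = 1 ∨ p c' = α) ∧ p c = 1 ∧ ∃ c', p c' = α}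

/-- The function `f_u(d,β,x,y)` from the one-step analysis. -/
noncomputable def fU (d : ℕ) (β x y : ℝ) : ℝ :=
  (1 - (1 - β) * y) ^ d /
    ((1 - (1 - β) * y) ^ d +
      2 * (1 - (1 - β) * x) ^ ((d : ℝ) / 2) *
        (1 - (1 - β) * (1 - x - y)) ^ ((d : ℝ) / 2))

/-- The function `f_ℓ(d,β,x,y)` from the one-step analysis. -/
noncomputable def fL (d : ℕ) (β x y : ℝ) : ℝ :=
  (1 - (1 - β) * x) ^ d /
    ((1 - (1 - β) * x) ^ d + (1 - (1 - β) * y) ^ d +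
      (1 - (1 - β) * (1 - x - y)) ^ d)

/-- The pair of sequences `(u_n(d,β), ℓ_n(d,β))`, defined by
`u_0 = 1`, `ℓ_0 = 0`, `u_{n+1} = f_u(d,β,u_n,ℓ_n)`, `ℓ_{n+1} = f_ℓ(d,β,u_n,ℓ_n)`. -/
noncomputable def ulSeq (d : ℕ) (β : ℝ) : ℕ → ℝ × ℝ
  | 0 => (1, 0)
  | n + 1 =>
      (fU d β (ulSeq d β n).1 (ulSeq d β n).2,
       fL d β (ulSeq d β n).1 (ulSeq d β n).2)

/-- Scaled slack in the derivative condition along the edge `x = 1 + e`,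
at `C = 2 + e² θ / (1 + e)`. -/
def edgeSlack (β κ e θ : ℝ) : ℝ :=
  4 * ((2 + β) * (1 + e) ^ 2 + (1 + 2 * β) * (2 * (1 + e) + e ^ 2 * θ) + 2 * (1 - β)) *
      ((1 + e) ^ 4 + (1 + β) * (1 + e) ^ 2 * (2 * (1 + e) + e ^ 2 * θ) +
        β * (2 * (1 + e) + e ^ 2 * θ) ^ 2 + (1 - β) ^ 2 * (1 + e) ^ 2) -
    (2 + β + (1 - β) * κ) * (β * (1 + e) ^ 2 + (2 * (1 + e) + e ^ 2 * θ)) *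
      ((2 * (1 + e) + e ^ 2 * θ) + 2 * (1 + β)) *
      ((1 + β) * (2 * (1 + e) + e ^ 2 * θ) + 2 * (1 + e) ^ 2)

set_option maxHeartbeats 4000000 in
theorem edgeSlack_nonneg_of_le_one {β e θ : ℝ} (hβ0 : 0 ≤ β) (hβ1 : β ≤ 1) (he0 : 0 ≤ e)
    (he1 : e ≤ 1) (hθ0 : 0 ≤ θ) (hθ1 : θ ≤ 1) : 0 ≤ edgeSlack β (1 + 17 / 8 * e) e θ := by
  obtain ⟨f, hf0, hf⟩ : ∃ f, 0 ≤ f ∧ f = 1 - e := ⟨_, by linarith, rfl⟩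
  obtain ⟨η, hη0, hη⟩ : ∃ η, 0 ≤ η ∧ η = 1 - θ := ⟨_, by linarith, rfl⟩
  obtain ⟨b, hb0, hb⟩ : ∃ b, 0 ≤ b ∧ b = 1 - β := ⟨_, by linarith, rfl⟩
  have key : edgeSlack β (1 + 17 / 8 * e) e θ =
      η ^ 3 * b ^ 4 * (f * (28 * e + 144 * e ^ 2 + 331 * e ^ 3 + 477 * e ^ 4 + 532 * e ^ 5 + 540
        * e ^ 6) + 540 * e ^ 7) +
      η ^ 3 * β * b ^ 3 * (f * (222 * e + 1016 * e ^ 2 + (4225/2) * e ^ 3 + 2839 * e ^ 4 +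
        (6137/2) * e ^ 5 + 3096 * e ^ 6) + 3096 * e ^ 7) +
      η ^ 3 * β ^ 2 * b ^ 2 * (f * (621 * e + 2652 * e ^ 2 + 5174 * e ^ 3 + 6652 * e ^ 4 + 7061 *
        e ^ 5 + 7104 * e ^ 6) + 7104 * e ^ 7) +
      η ^ 3 * β ^ 3 * b * (f * ((1485/2) * e + 3042 * e ^ 2 + 5709 * e ^ 3 + 7150 * e ^ 4 +
        (15033/2) * e ^ 5 + 7552 * e ^ 6) + 7552 * e ^ 7) +
      η ^ 3 * β ^ 4 * (f * (324 * e + 1296 * e ^ 2 + 2376 * e ^ 3 + 2928 * e ^ 4 + 3060 * e ^ 5 +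
        3072 * e ^ 6) + 3072 * e ^ 7) +
      θ * η ^ 2 * b ^ 4 * (f * (84 * e + 376 * e ^ 2 + 797 * e ^ 3 + 1111 * e ^ 4 + 1231 * e ^ 5
        + 1250 * e ^ 6) + 1250 * e ^ 7) +
      θ * η ^ 2 * β * b ^ 3 * (f * (666 * e + 2884 * e ^ 2 + (11657/2) * e ^ 3 + 7777 * e ^ 4 +
        (33621/4) * e ^ 5 + (33893/4) * e ^ 6) + 8469 * e ^ 7) +
      θ * η ^ 2 * β ^ 2 * b ^ 2 * (f * (1863 * e + 7848 * e ^ 2 + 15466 * e ^ 3 + (40481/2) * e ^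
        4 + 21664 * e ^ 5 + (43601/2) * e ^ 6) + 21792 * e ^ 7) +
      θ * η ^ 2 * β ^ 3 * b * (f * ((4455/2) * e + 9180 * e ^ 2 + (71175/4) * e ^ 3 + (92191/4) *
        e ^ 4 + (98283/4) * e ^ 5 + (98897/4) * e ^ 6) + 24720 * e ^ 7) +
      θ * η ^ 2 * β ^ 4 * (f * (972 * e + 3942 * e ^ 2 + 7542 * e ^ 3 + 9690 * e ^ 4 + 10302 * e
        ^ 5 + 10368 * e ^ 6) + 10368 * e ^ 7) +
      θ ^ 2 * η * b ^ 4 * (f * (84 * e + 320 * e ^ 2 + 601 * e ^ 3 + 765 * e ^ 4 + (3187/4) * e ^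
        5 + (1575/2) * e ^ 6) + 3133/4 * e ^ 7) +
      θ ^ 2 * η * β * b ^ 3 * (f * (666 * e + 2720 * e ^ 2 + (10639/2) * e ^ 3 + 6952 * e ^ 4 +
        (59079/8) * e ^ 5 + (58933/8) * e ^ 6) + 29373/4 * e ^ 7) +
      θ ^ 2 * η * β ^ 2 * b ^ 2 * (f * (1863 * e + 7740 * e ^ 2 + 15410 * e ^ 3 + 20469 * e ^ 4 +
        (176209/8) * e ^ 5 + (176929/8) * e ^ 6) + 22080 * e ^ 7) +
      θ ^ 2 * η * β ^ 3 * b * (f * ((4455/2) * e + 9234 * e ^ 2 + (36921/2) * e ^ 3 + (49369/2) *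
        e ^ 4 + 26744 * e ^ 5 + 26963 * e ^ 6) + 26946 * e ^ 7) +
      θ ^ 2 * η * β ^ 4 * (f * (972 * e + 3996 * e ^ 2 + 7956 * e ^ 3 + 10632 * e ^ 4 + 11544 * e
        ^ 5 + 11664 * e ^ 6) + 11664 * e ^ 7) +
      θ ^ 3 * b ^ 4 * (f * (28 * e + 88 * e ^ 2 + 135 * e ^ 3 + 131 * e ^ 4 + (391/4) * e ^ 5 +
        (149/2) * e ^ 6) + 545/8 * e ^ 7) +
      θ ^ 3 * β * b ^ 3 * (f * (222 * e + 852 * e ^ 2 + (3207/2) * e ^ 3 + 2014 * e ^ 4 +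
        (16385/8) * e ^ 5 + (15827/8) * e ^ 6) + 7803/4 * e ^ 7) +
      θ ^ 3 * β ^ 2 * b ^ 2 * (f * (621 * e + 2544 * e ^ 2 + 5118 * e ^ 3 + (13761/2) * e ^ 4 +
        (59385/8) * e ^ 5 + (59301/8) * e ^ 6) + 58995/8 * e ^ 7) +
      θ ^ 3 * β ^ 3 * b * (f * ((1485/2) * e + 3096 * e ^ 2 + (25503/4) * e ^ 3 + (35147/4) * e ^
        4 + (38759/4) * e ^ 5 + (39191/4) * e ^ 6) + 39123/4 * e ^ 7) +
      θ ^ 3 * β ^ 4 * (f * (324 * e + 1350 * e ^ 2 + 2790 * e ^ 3 + 3870 * e ^ 4 + 4302 * e ^ 5 +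
        4374 * e ^ 6) + 4374 * e ^ 7) := by
    subst hf hη hb
    unfold edgeSlack
    ring
  rw [key]
  positivity

set_option maxHeartbeats 4000000 in
theorem edgeSlack_nonneg_of_one_le {β e θ : ℝ} (hβ0 : 0 ≤ β) (hβ1 : β ≤ 1) (he1 : 1 ≤ e)
    (hθ0 : 0 ≤ θ) (hθ1 : θ ≤ 1) : 0 ≤ edgeSlack β (25 / 8 + 4 * β) e θ := by
  obtain ⟨t, ht0, rfl⟩ : ∃ t, 0 ≤ t ∧ e = 1 + t := ⟨e - 1, by linarith, by ring⟩
  obtain ⟨η, hη0, hη⟩ : ∃ η, 0 ≤ η ∧ η = 1 - θ := ⟨_, by linarith, rfl⟩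
  obtain ⟨b, hb0, hb⟩ : ∃ b, 0 ≤ b ∧ b = 1 - β := ⟨_, by linarith, rfl⟩
  have key : edgeSlack β (25 / 8 + 4 * β) (1 + t) θ =
      η ^ 3 * b ^ 5 * (540 + 2340 * t + 3243 * t ^ 2 + 2110 * t ^ 3 + 711 * t ^ 4 + 120 * t ^ 5 +
        8 * t ^ 6) +
      η ^ 3 * β * b ^ 4 * (2484 + 12594 * t + 18139 * t ^ 2 + (23803/2) * t ^ 3 + 3994 * t ^ 4 +
        (1335/2) * t ^ 5 + 44 * t ^ 6) +
      η ^ 3 * β ^ 2 * b ^ 3 * (4824 + 27710 * t + 40752 * t ^ 2 + (53455/2) * t ^ 3 + 8895 * t ^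
        4 + (2941/2) * t ^ 5 + 96 * t ^ 6) +
      η ^ 3 * β ^ 3 * b ^ 2 * (6464 + 33808 * t + 48040 * t ^ 2 + 30742 * t ^ 3 + 10012 * t ^ 4 +
        (3245/2) * t ^ 5 + 104 * t ^ 6) +
      η ^ 3 * β ^ 4 * b * (6528 + 24608 * t + 31112 * t ^ 2 + 18638 * t ^ 3 + 5792 * t ^ 4 +
        (1807/2) * t ^ 5 + 56 * t ^ 6) +
      η ^ 3 * β ^ 5 * (3072 + 8448 * t + 9024 * t ^ 2 + 4848 * t ^ 3 + 1392 * t ^ 4 + 204 * t ^ 5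
        + 12 * t ^ 6) +
      θ * η ^ 2 * b ^ 5 * (1250 + 6043 * t + 8953 * t ^ 2 + 6300 * t ^ 3 + 2355 * t ^ 4 + 455 * t
        ^ 5 + 36 * t ^ 6) +
      θ * η ^ 2 * β * b ^ 4 * (5687 + 33551 * t + (208067/4) * t ^ 2 + (74029/2) * t ^ 3 +
        (27547/2) * t ^ 4 + (5239/2) * t ^ 5 + (807/4) * t ^ 6) +
      θ * η ^ 2 * β ^ 2 * b ^ 3 * (11733 + 78122 * t + (492991/4) * t ^ 2 + 87488 * t ^ 3 + 32143
        * t ^ 4 + 5984 * t ^ 5 + (1789/4) * t ^ 6) +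
      θ * η ^ 2 * β ^ 3 * b ^ 2 * (18608 + 103758 * t + 155897 * t ^ 2 + (214643/2) * t ^ 3 +
        (153357/4) * t ^ 4 + (13843/2) * t ^ 5 + (1997/4) * t ^ 6) +
      θ * η ^ 2 * β ^ 4 * b * (21264 + 82232 * t + 109089 * t ^ 2 + 70084 * t ^ 3 + (95219/4) * t
        ^ 4 + 4110 * t ^ 5 + (1135/4) * t ^ 6) +
      θ * η ^ 2 * β ^ 5 * (10368 + 29760 * t + 33768 * t ^ 2 + 19632 * t ^ 3 + 6198 * t ^ 4 +
        1008 * t ^ 5 + 66 * t ^ 6) +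
      θ ^ 2 * η * b ^ 5 * (3133/4 + (18493/4) * t + (29469/4) * t ^ 2 + (11047/2) * t ^ 3 +
        (8879/4) * t ^ 4 + (1877/4) * t ^ 5 + (167/4) * t ^ 6) +
      θ ^ 2 * η * β * b ^ 4 * (6861/2 + (108407/4) * t + (365107/8) * t ^ 2 + (69529/2) * t ^ 3 +
        (55775/4) * t ^ 4 + (11615/4) * t ^ 5 + (2011/8) * t ^ 6) +
      θ ^ 2 * η * β ^ 2 * b ^ 3 * (32605/4 + (277617/4) * t + 117823 * t ^ 2 + 89370 * t ^ 3 +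
        (141493/4) * t ^ 4 + (28791/4) * t ^ 5 + (1203/2) * t ^ 6) +
      θ ^ 2 * η * β ^ 3 * b ^ 2 * (17346 + (416609/4) * t + (1317923/8) * t ^ 2 + 120520 * t ^ 3
        + (185303/4) * t ^ 4 + (36517/4) * t ^ 5 + (5855/8) * t ^ 6) +
      θ ^ 2 * η * β ^ 4 * b * (23058 + (182685/2) * t + (253145/2) * t ^ 2 + 86431 * t ^ 3 +
        (63393/2) * t ^ 4 + 5998 * t ^ 5 + 460 * t ^ 6) +
      θ ^ 2 * η * β ^ 5 * (11664 + 34884 * t + 41880 * t ^ 2 + 26184 * t ^ 3 + 9036 * t ^ 4 +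
        1632 * t ^ 5 + 120 * t ^ 6) +
      θ ^ 3 * b ^ 5 * (545/8 + (1779/2) * t + (12643/8) * t ^ 2 + 1231 * t ^ 3 + (3991/8) * t ^ 4
        + (207/2) * t ^ 5 + (69/8) * t ^ 6) +
      θ ^ 3 * β * b ^ 4 * (1591/8 + 5973 * t + (45325/4) * t ^ 2 + 9079 * t ^ 3 + (29879/8) * t ^
        4 + 780 * t ^ 5 + 65 * t ^ 6) +
      θ ^ 3 * β ^ 2 * b ^ 3 * (9513/8 + (37347/2) * t + (276243/8) * t ^ 2 + 27547 * t ^ 3 +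
        (90627/8) * t ^ 4 + (4731/2) * t ^ 5 + (1577/8) * t ^ 6) +
      θ ^ 3 * β ^ 3 * b ^ 2 * (41337/8 + 33993 * t + (225441/4) * t ^ 2 + 43243 * t ^ 3 +
        (139803/8) * t ^ 4 + 3621 * t ^ 5 + (1207/4) * t ^ 6) +
      θ ^ 3 * β ^ 4 * b * (33291/4 + 33723 * t + (194427/4) * t ^ 2 + 35000 * t ^ 3 + 13695 * t ^
        4 + 2796 * t ^ 5 + 233 * t ^ 6) +
      θ ^ 3 * β ^ 5 * (4374 + 13608 * t + 17226 * t ^ 2 + 11520 * t ^ 3 + 4320 * t ^ 4 + 864 * t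
        ^ 5 + 72 * t ^ 6) := by
    subst hη hb
    unfold edgeSlack
    ring
  rw [key]
  positivity

/-- Scaled slack in the derivative condition in the direction of `x`, at the boundary `x = r³ v`,
where `u = r²`. -/
def vertSlack (β κ v u : ℝ) : ℝ :=
  4 * (u ^ 4 * v ^ 2 + (1 + β) * u ^ 2 * (u + 1) * v + β * (u + 1) ^ 2 + (1 - β) ^ 2 * u) *
      ((2 + β) * u ^ 2 * (u + 1) * v + (1 + 2 * β) * (u + 1) ^ 2 - 2 * β * (1 - β) * u) -
    (2 + β + (1 - β) * κ) * (u - 1) ^ 2 *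
      ((1 - β) * ((2 + β) * u ^ 2 * (u + 1) * v + (1 + 2 * β) * (u + 1) ^ 2 -
          2 * β * (1 - β) * u) +
        2 * β * (u ^ 4 * v ^ 2 + (1 + β) * u ^ 2 * (u + 1) * v + β * (u + 1) ^ 2 +
          (1 - β) ^ 2 * u))

set_option maxHeartbeats 4000000 in
theorem vertSlack_nonneg_of_le_half {β u : ℝ} (hβ0 : 0 ≤ β) (hβ1 : β ≤ 1/2)
    (hu : 1 ≤ u) : 0 ≤ vertSlack β (25 / 8 + 4 * β) (1/8) u := by
  obtain ⟨t, ht0, rfl⟩ : ∃ t, 0 ≤ t ∧ u = 1 + t := ⟨u - 1, by linarith, by ring⟩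
  obtain ⟨s, hs, hs0, hs1⟩ : ∃ s, β = 1/2 * s ∧ 0 ≤ s ∧ s ≤ 1 :=
    ⟨(β - 0) / (1/2), by ring, by linarith, by linarith⟩
  obtain ⟨z, hz0, hz⟩ : ∃ z, 0 ≤ z ∧ z = 1 - s := ⟨_, by linarith, rfl⟩
  have key : vertSlack β (25 / 8 + 4 * β) (1/8) (1 + t) =
      z ^ 4 * (729/32 + (3645/64) * t + (531/16) * t ^ 2 + (237/64) * t ^ 3 + (13/32) * t ^ 4 +
        (73/64) * t ^ 5 + (5/16) * t ^ 6 + (1/64) * t ^ 7) +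
      s * z ^ 3 * (16281/128 + (80109/256) * t + (104311/512) * t ^ 2 + (11567/256) * t ^ 3 +
        (2591/256) * t ^ 4 + (1595/256) * t ^ 5 + (695/512) * t ^ 6 + (17/256) * t ^ 7) +
      s ^ 2 * z ^ 2 * (34047/128 + (164871/256) * t + (469451/1024) * t ^ 2 + (17527/128) * t ^ 3
        + (17437/512) * t ^ 4 + (1581/128) * t ^ 5 + (2251/1024) * t ^ 6 + (27/256) * t ^ 7) +
      s ^ 3 * z * (31603/128 + (150631/256) * t + (14375/32) * t ^ 2 + (81043/512) * t ^ 3 +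
        (5157/128) * t ^ 4 + (5463/512) * t ^ 5 + (407/256) * t ^ 6 + (19/256) * t ^ 7) +
      s ^ 4 * (10985/128 + (51545/256) * t + (165763/1024) * t ^ 2 + (32253/512) * t ^ 3 +
        (8229/512) * t ^ 4 + (1761/512) * t ^ 5 + (447/1024) * t ^ 6 + (5/256) * t ^ 7) := by
    subst hz hs
    unfold vertSlack
    ring
  rw [key]
  positivity

set_option maxHeartbeats 4000000 in
theorem vertSlack_nonneg_of_two_fifths_le {β u : ℝ} (hβ0 : 2/5 ≤ β) (hβ1 : β ≤ 1)
    (hu : 1 ≤ u) : 0 ≤ vertSlack β (25 / 8 + 4 * β) (1/16) u := by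
  obtain ⟨t, ht0, rfl⟩ : ∃ t, 0 ≤ t ∧ u = 1 + t := ⟨u - 1, by linarith, by ring⟩
  obtain ⟨s, hs, hs0, hs1⟩ : ∃ s, β = 2/5 + 3/5 * s ∧ 0 ≤ s ∧ s ≤ 1 :=
    ⟨(β - 2/5) / (3/5), by ring, by linarith, by linarith⟩
  obtain ⟨z, hz0, hz⟩ : ∃ z, 0 ≤ z ∧ z = 1 - s := ⟨_, by linarith, rfl⟩
  have key : vertSlack β (25 / 8 + 4 * β) (1/16) (1 + t) =
      z ^ 4 * (4804839/80000 + (21067371/160000) * t + (26671437/320000) * t ^ 2 + (540351/32000)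
        * t ^ 3 + (205821/160000) * t ^ 4 + (106839/160000) * t ^ 5 + (5313/64000) * t ^ 6 +
        (3/1280) * t ^ 7) +
      s * z ^ 3 * (21067371/64000 + (91765791/128000) * t + (12549897/25600) * t ^ 2 +
        (16717833/128000) * t ^ 3 + (578907/32000) * t ^ 4 + (500949/128000) * t ^ 5 +
        (47241/128000) * t ^ 6 + (51/5120) * t ^ 7) +
      s ^ 2 * z ^ 2 * (8652501/12800 + (37444113/25600) * t + (3402081/3200) * t ^ 2 +
        (8520363/25600) * t ^ 3 + (708201/12800) * t ^ 4 + (42291/5120) * t ^ 5 + (3987/6400) * t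
        ^ 6 + (81/5120) * t ^ 7) +
      s ^ 3 * z * (1577961/2560 + (1356993/1024) * t + (5166153/5120) * t ^ 2 + (1790451/5120) *
        t ^ 3 + (10089/160) * t ^ 4 + (38871/5120) * t ^ 5 + (489/1024) * t ^ 6 + (57/5120) * t ^
        7) +
      s ^ 4 * (107811/512 + (460647/1024) * t + (90585/256) * t ^ 2 + (133893/1024) * t ^ 3 +
        (12627/512) * t ^ 4 + (2673/1024) * t ^ 5 + (9/64) * t ^ 6 + (3/1024) * t ^ 7) := by
    subst hz hs
    unfold vertSlack
    ring
  rw [key]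
  positivity

set_option maxHeartbeats 4000000 in
theorem vertSlack_nonneg_crude {β u : ℝ} (hβ0 : 0 ≤ β) (hβ1 : β ≤ 1)
    (hu : 1 ≤ u) : 0 ≤ vertSlack β (3 + β) (2/25) u := by
  obtain ⟨t, ht0, rfl⟩ : ∃ t, 0 ≤ t ∧ u = 1 + t := ⟨u - 1, by linarith, by ring⟩
  obtain ⟨s, hs, hs0, hs1⟩ : ∃ s, β = s ∧ 0 ≤ s ∧ s ≤ 1 :=
    ⟨(β - 0) / (1), by ring, by linarith, by linarith⟩
  obtain ⟨z, hz0, hz⟩ : ∃ z, 0 ≤ z ∧ z = 1 - s := ⟨_, by linarith, rfl⟩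
  have key : vertSlack β (3 + β) (2/25) (1 + t) =
      z ^ 4 * (314928/15625 + (281082/15625) * t + (149407/125000) * t ^ 2 + (264/3125) * t ^ 3 +
        (89/2500) * t ^ 4 + (78/15625) * t ^ 5 + (71/125000) * t ^ 6 + (64/15625) * t ^ 7 +
        109/1000 * t ^ 2 * (t ^ 2 - 13) ^ 2 + 6/25 * t * (t ^ 2 - 11) ^ 2) +
      s * z ^ 3 * (2291976/15625 + (5250744/15625) * t + (3142668/15625) * t ^ 2 + (96858/3125) *
        t ^ 3 + (1148/625) * t ^ 4 + (48626/15625) * t ^ 5 + (8104/15625) * t ^ 6 + (288/15625) *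
        t ^ 7) +
      s ^ 2 * z ^ 2 * (1246752/3125 + (2805048/3125) * t + (2023216/3125) * t ^ 2 + (125654/625)
        * t ^ 3 + (25212/625) * t ^ 4 + (28042/3125) * t ^ 5 + (2928/3125) * t ^ 6 + (96/3125) *
        t ^ 7) +
      s ^ 3 * z * (7506304/15625 + (16592576/15625) * t + (13107872/15625) * t ^ 2 +
        (981182/3125) * t ^ 3 + (41657/625) * t ^ 4 + (153154/15625) * t ^ 5 + (12016/15625) * t
        ^ 6 + (352/15625) * t ^ 7) +
      s ^ 4 * (3374592/15625 + (7333248/15625) * t + (5955456/15625) * t ^ 2 + (467256/3125) * t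
        ^ 3 + (19542/625) * t ^ 4 + (58992/15625) * t ^ 5 + (3768/15625) * t ^ 6 + (96/15625) * t
        ^ 7) := by
    subst hz hs
    unfold vertSlack
    ring
  rw [key]
  positivity

set_option maxHeartbeats 4000000 in
theorem vertSlack_nonneg_crude_of_quarter_le {β u : ℝ} (hβ0 : 1/4 ≤ β) (hβ1 : β ≤ 1)
    (hu : 1 ≤ u) : 0 ≤ vertSlack β (3 + β) (1/21) u := by
  obtain ⟨t, ht0, rfl⟩ : ∃ t, 0 ≤ t ∧ u = 1 + t := ⟨u - 1, by linarith, by ring⟩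
  obtain ⟨s, hs, hs0, hs1⟩ : ∃ s, β = 1/4 + 3/4 * s ∧ 0 ≤ s ∧ s ≤ 1 :=
    ⟨(β - 1/4) / (3/4), by ring, by linarith, by linarith⟩
  obtain ⟨z, hz0, hz⟩ : ∃ z, 0 ≤ z ∧ z = 1 - s := ⟨_, by linarith, rfl⟩
  have key : vertSlack β (3 + β) (1/21) (1 + t) =
      z ^ 4 * (1295029/32928 + (700979/8232) * t + (2032523/43904) * t ^ 2 + (4787221/6585600) *
        t ^ 3 + (15367/823200) * t ^ 4 + (5723/2195200) * t ^ 5 + (1369/32928) * t ^ 6 + (1/1029)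
        * t ^ 7 + 13/50 * t ^ 3 * (t - 3) ^ 2) +
      s * z ^ 3 * (736622/3087 + (25332799/49392) * t + (10710827/32928) * t ^ 2 +
        (6670493/98784) * t ^ 3 + (963731/197568) * t ^ 4 + (68963/32928) * t ^ 5 + (18931/98784)
        * t ^ 6 + (13/3087) * t ^ 7) +
      s ^ 2 * z ^ 2 * (79679/147 + (97165/84) * t + (158665/196) * t ^ 2 + (272165/1176) * t ^ 3
        + (77471/2352) * t ^ 4 + (1997/392) * t ^ 5 + (197/588) * t ^ 6 + (1/147) * t ^ 7) +
      s ^ 3 * z * (562096/1029 + (1191143/1029) * t + (589513/686) * t ^ 2 + (1162799/4116) * t ^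
        3 + (189307/4116) * t ^ 4 + (6893/1372) * t ^ 5 + (271/1029) * t ^ 6 + (5/1029) * t ^ 7) +
      s ^ 4 * (636056/3087 + (1338676/3087) * t + (340990/1029) * t ^ 2 + (356884/3087) * t ^ 3 +
        (60302/3087) * t ^ 4 + (1828/1029) * t ^ 5 + (242/3087) * t ^ 6 + (4/3087) * t ^ 7) := by
    subst hz hs
    unfold vertSlack
    ring
  rw [key]
  positivity

set_option maxHeartbeats 4000000 in
theorem crude_const_coeff_nonneg {β s : ℝ} (hβ0 : 0 ≤ β) (hβ1 : β ≤ 1)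
    (hs0 : 141 / 100 + 58 / 100 * β ≤ s) (hs1 : s ≤ 22 / 10 + 75 / 100 * β) :
    0 ≤ (201 / 200 * s ^ 2 + 1) * (-(3 + β) * (4 + β - 2 * s) * (4 - β + β ^ 2 + 2 * s * (1 + 3 * β)) -
      2 * (2 + β) * (2 * s + β) ^ 2 - (3 + β) * (2 * s * (1 + β) - β) *
        (2 * s * (1 + β ^ 2) + 3 * β - β ^ 2) * (29 / 100 - 13 / 100 * β) ^ 2) +
      4 * (137 / 100 + 62 / 100 * β) * (2 * (2 + β) * (2 * s + β) ^ 2) := by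
  have hw : 0 < 79 / 100 + 17 / 100 * β := by positivity
  obtain ⟨t, hs, ht0, ht1⟩ : ∃ t, s = 141 / 100 + 58 / 100 * β + (79 / 100 + 17 / 100 * β) * t ∧
      0 ≤ t ∧ t ≤ 1 :=
    ⟨(s - (141 / 100 + 58 / 100 * β)) / (79 / 100 + 17 / 100 * β), by field_simp; ring,
      div_nonneg (by linarith) hw.le, by rw [div_le_one hw]; linarith⟩
  obtain ⟨b, hb0, hb⟩ : ∃ b, 0 ≤ b ∧ b = 1 - β := ⟨_, by linarith, rfl⟩
  obtain ⟨z, hz0, hz⟩ : ∃ z, 0 ≤ z ∧ z = 1 - t := ⟨_, by linarith, rfl⟩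
  have key : (201 / 200 * s ^ 2 + 1) * (-(3 + β) * (4 + β - 2 * s) * (4 - β + β ^ 2 + 2 * s * (1 + 3 * β)) -
      2 * (2 + β) * (2 * s + β) ^ 2 - (3 + β) * (2 * s * (1 + β) - β) *
        (2 * s * (1 + β ^ 2) + 3 * β - β ^ 2) * (29 / 100 - 13 / 100 * β) ^ 2) +
      4 * (137 / 100 + 62 / 100 * β) * (2 * (2 + β) * (2 * s + β) ^ 2) =
      b ^ 10 * (27690334501197/50000000000000 * z ^ 4 + 21453696264987/625000000000 * t * z ^ 3 +
        5229063674731/62500000000 * t ^ 2 * z ^ 2 + 82138426967/1562500000 * t ^ 3 * z +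
        223387157/312500000 * t ^ 4) +
      β * b ^ 9 * (99796936316587/3125000000000 * z ^ 4 + 17380416707771/39062500000 * t * z ^ 3
        + 762115171299/781250000 * t ^ 2 * z ^ 2 + 980156486729/1562500000 * t ^ 3 * z +
        4363588507/78125000 * t ^ 4) +
      β ^ 2 * b ^ 8 * (3378845777045193/12500000000000 * z ^ 4 + 49097420029919/20000000000 * t *
        z ^ 3 + 5000248798257723/1000000000000 * t ^ 2 * z ^ 2 + 16805694389301/5000000000 * t ^
        3 * z + 1419654181711/2500000000 * t ^ 4) +
      β ^ 3 * b ^ 7 * (13249262530891577/12500000000000 * z ^ 4 + 1912528683069979/250000000000 *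
        t * z ^ 3 + 1854199751795771/125000000000 * t ^ 2 * z ^ 2 + 133404407220321/12500000000 *
        t ^ 3 * z + 1688714530703/625000000 * t ^ 4) +
      β ^ 4 * b ^ 6 * (24038752138971589/10000000000000 * z ^ 4 + 18674220989038341/1250000000000
        * t * z ^ 3 + 28190585190058947/1000000000000 * t ^ 2 * z ^ 2 +
        2231281756506313/100000000000 * t ^ 3 * z + 608309743282653/80000000000 * t ^ 4) +
      β ^ 5 * b ^ 5 * (42716251684665461/12500000000000 * z ^ 4 + 23817423635265489/1250000000000
        * t * z ^ 3 + 17930385810258161/500000000000 * t ^ 2 * z ^ 2 + 161207415978567/5000000000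
        * t ^ 3 * z + 43277248643/3125000 * t ^ 4) +
      β ^ 6 * b ^ 4 * (77844350869499199/25000000000000 * z ^ 4 + 39887120181013931/2500000000000
        * t * z ^ 3 + 774193747220699/25000000000 * t ^ 2 * z ^ 2 + 3278767358847781/100000000000
        * t ^ 3 * z + 675912129154297/40000000000 * t ^ 4) +
      β ^ 7 * b ^ 3 * (1392919770095367/781250000000 * z ^ 4 + 213280033526223/25000000000 * t *
        z ^ 3 + 2251411626121229/125000000000 * t ^ 2 * z ^ 2 + 582486619717973/25000000000 * t ^
        3 * z + 69039575991011/5000000000 * t ^ 4) +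
      β ^ 8 * b ^ 2 * (1861851352706217/3125000000000 * z ^ 4 + 84424765816239/31250000000 * t *
        z ^ 3 + 426652298957277/62500000000 * t ^ 2 * z ^ 2 + 69486575802669/6250000000 * t ^ 3 *
        z + 7284631641177/1000000000 * t ^ 4) +
      β ^ 9 * b * (29862159472683/312500000000 * z ^ 4 + 32983739313939/78125000000 * t * z ^ 3 +
        48526900174269/31250000000 * t ^ 2 * z ^ 2 + 10060938282267/3125000000 * t ^ 3 * z +
        5624758784871/2500000000 * t ^ 4) +
      β ^ 10 * (5252397347997/1562500000000 * z ^ 4 + 1354020362937/78125000000 * t * z ^ 3 +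
        5164626750831/31250000000 * t ^ 2 * z ^ 2 + 1337449114017/3125000000 * t ^ 3 * z +
        773576978157/2500000000 * t ^ 4) := by
    subst hz hb hs
    ring
  rw [key]
  positivity

set_option maxHeartbeats 4000000 in
theorem crude_lin_coeff_nonneg {β s : ℝ} (hβ0 : 0 ≤ β) (hβ1 : β ≤ 1)
    (hs0 : 141 / 100 + 58 / 100 * β ≤ s) (hs1 : s ≤ 22 / 10 + 75 / 100 * β) :
    0 ≤ (3 + β) * ((2 * s * (1 + β) - β) * (4 - β + β ^ 2 + 2 * s * (1 + 3 * β)) -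
      (4 + β - 2 * s) * (2 * s * (1 + β ^ 2) + 3 * β - β ^ 2)) +
      2 * (3 + β) * (2 * s * (1 + β) - β) * (2 * s * (1 + β ^ 2) + 3 * β - β ^ 2) *
        (29 / 100 - 13 / 100 * β) -
      2 * (2 + β) * (2 * s + β) ^ 2 * (137 / 100 + 62 / 100 * β) ^ 2 := by
  have hw : 0 < 79 / 100 + 17 / 100 * β := by positivity
  obtain ⟨t, hs, ht0, ht1⟩ : ∃ t, s = 141 / 100 + 58 / 100 * β + (79 / 100 + 17 / 100 * β) * t ∧
      0 ≤ t ∧ t ≤ 1 :=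
    ⟨(s - (141 / 100 + 58 / 100 * β)) / (79 / 100 + 17 / 100 * β), by field_simp; ring,
      div_nonneg (by linarith) hw.le, by rw [div_le_one hw]; linarith⟩
  obtain ⟨b, hb0, hb⟩ : ∃ b, 0 ≤ b ∧ b = 1 - β := ⟨_, by linarith, rfl⟩
  obtain ⟨z, hz0, hz⟩ : ∃ z, 0 ≤ z ∧ z = 1 - t := ⟨_, by linarith, rfl⟩
  have key : (3 + β) * ((2 * s * (1 + β) - β) * (4 - β + β ^ 2 + 2 * s * (1 + 3 * β)) -
      (4 + β - 2 * s) * (2 * s * (1 + β ^ 2) + 3 * β - β ^ 2)) +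
      2 * (3 + β) * (2 * s * (1 + β) - β) * (2 * s * (1 + β ^ 2) + 3 * β - β ^ 2) *
        (29 / 100 - 13 / 100 * β) -
      2 * (2 + β) * (2 * s + β) ^ 2 * (137 / 100 + 62 / 100 * β) ^ 2 =
      b ^ 7 * (11550861/6250000 * z ^ 2 + 901131/156250 * t * z + 70301/15625 * t ^ 2) +
      β * b ^ 6 * (93232281/12500000 * z ^ 2 + 9490203/125000 * t * z + 1331772/15625 * t ^ 2) +
      β ^ 2 * b ^ 5 * (11996927/1562500 * z ^ 2 + 520047803/1250000 * t * z + 133251433/250000 *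
        t ^ 2) +
      β ^ 3 * b ^ 4 * (3598047/2500000 * z ^ 2 + 1535816717/1250000 * t * z + 822146981/500000 *
        t ^ 2) +
      β ^ 4 * b ^ 3 * (131670051/6250000 * z ^ 2 + 263331537/125000 * t * z + 353459531/125000 *
        t ^ 2) +
      β ^ 5 * b ^ 2 * (722334087/12500000 * z ^ 2 + 163176081/78125 * t * z + 690280779/250000 *
        t ^ 2) +
      β ^ 6 * b * (7786917/156250 * z ^ 2 + 1377326079/1250000 * t * z + 356895819/250000 * t ^
        2) +
      β ^ 7 * (167440797/12500000 * z ^ 2 + 295231257/1250000 * t * z + 150764517/500000 * t ^ 2) := by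
    subst hz hb hs
    ring
  rw [key]
  positivity

/-- Product of the two transformed weights of the pair `(r, 1/r)`, as a function of the remaining
weight `x` and of `C = r + 1/r`. -/
def pairProd (β x C : ℝ) : ℝ := x ^ 2 + (1 + β) * x * C + β * C ^ 2 + (1 - β) ^ 2

/-- Log-ratio of the pair product to the square of the remaining weight, with a quadratic
correction. -/
noncomputable def logGap (β Q x C : ℝ) : ℝ :=
  2 * Real.log (β * x + C) - Real.log (pairProd β x C) -
    Q * (1 - β) / 4 * ((C ^ 2 - 4) / pairProd β x C)

/-- Slack in the derivative condition along the edge `x = E`. -/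
def edgeCond (β Q E C : ℝ) : Prop :=
  Q * (β * E + C) * (E * C + 2 * (1 + β)) * ((1 + β) * C + 2 * E) ≤
    4 * ((2 + β) * E ^ 2 + (1 + 2 * β) * E * C + 2 * (1 - β)) * pairProd β E C

/-- Slack in the derivative condition in the direction of `x`. -/
def vertCond (β Q x C : ℝ) : Prop :=
  Q * (C ^ 2 - 4) * (2 * x + (1 + β) * C) * (β * x + C) ≤
    4 * pairProd β x C * ((2 + β) * x * C + (1 + 2 * β) * C ^ 2 - 2 * β * (1 - β))

theorem pairProd_pos {β x C : ℝ} (hβ0 : 0 ≤ β) (hx : 0 < x) (hC : 0 < C) :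
    0 < pairProd β x C := by
  unfold pairProd; positivity

theorem hasDerivAt_logGap_C {β Q x C : ℝ} (hβ0 : 0 ≤ β) (hx : 0 < x) (hC : 0 < C) :
    HasDerivAt (fun C => logGap β Q x C)
      (2 * (1 / (β * x + C)) - ((1 + β) * x + 2 * β * C) / pairProd β x C -
        Q * (1 - β) / 4 * ((2 * C * pairProd β x C - (C ^ 2 - 4) * ((1 + β) * x + 2 * β * C)) /
          pairProd β x C ^ 2)) C := by
  have hW := pairProd_pos hβ0 hx hC
  have hw : β * x + C ≠ 0 := by positivity
  have h1 : HasDerivAt (fun C => β * x + C) 1 C := by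
    simpa using (hasDerivAt_id C).const_add (β * x)
  have hsq : HasDerivAt (fun C : ℝ => C ^ 2) (2 * C) C := by
    simpa using hasDerivAt_pow 2 C
  have h2 : HasDerivAt (fun C => pairProd β x C) ((1 + β) * x + 2 * β * C) C := by
    unfold pairProd
    exact (((((hasDerivAt_id C).const_mul ((1 + β) * x)).const_add (x ^ 2)).add
      (hsq.const_mul β)).add_const ((1 - β) ^ 2)).congr_deriv (by ring)
  unfold logGap
  exact (((h1.log hw).const_mul 2).sub (h2.log hW.ne')).sub
    (((hsq.sub_const 4).div h2 hW.ne').const_mul _)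

theorem hasDerivAt_logGap_x {β Q x C : ℝ} (hβ0 : 0 ≤ β) (hx : 0 < x) (hC : 0 < C) :
    HasDerivAt (fun x => logGap β Q x C)
      (2 * (β / (β * x + C)) - (2 * x + (1 + β) * C) / pairProd β x C -
        Q * (1 - β) / 4 * ((0 * pairProd β x C - (C ^ 2 - 4) * (2 * x + (1 + β) * C)) /
          pairProd β x C ^ 2)) x := by
  have hW := pairProd_pos hβ0 hx hC
  have hw : β * x + C ≠ 0 := by positivity
  have h1 : HasDerivAt (fun x => β * x + C) β x := by
    simpa using ((hasDerivAt_id x).const_mul β).add_const C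
  have hsq : HasDerivAt (fun x : ℝ => x ^ 2) (2 * x) x := by
    simpa using hasDerivAt_pow 2 x
  have h2 : HasDerivAt (fun x => pairProd β x C) (2 * x + (1 + β) * C) x := by
    unfold pairProd
    exact (((hsq.add (((hasDerivAt_id x).const_mul (1 + β)).mul_const C)).add_const
      (β * C ^ 2)).add_const ((1 - β) ^ 2)).congr_deriv (by ring)
  unfold logGap
  exact (((h1.log hw).const_mul 2).sub (h2.log hW.ne')).sub
    (((hasDerivAt_const x (C ^ 2 - 4)).div h2 hW.ne').const_mul _)

theorem logGap_edge_mono {β Q E C : ℝ} (hβ0 : 0 ≤ β) (hβ1 : β ≤ 1) (hE : 0 < E) (hC : 2 ≤ C)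
    (h : ∀ c, 2 ≤ c → c ≤ C → edgeCond β Q E c) : logGap β Q E 2 ≤ logGap β Q E C := by
  have hd : ∀ c : ℝ, 2 ≤ c → _ := fun c hc =>
    hasDerivAt_logGap_C (β := β) (Q := Q) (C := c) hβ0 hE (by linarith)
  refine monotoneOn_of_deriv_nonneg (convex_Icc 2 C) (f := fun c => logGap β Q E c)
    (fun c hc => (hd c hc.1).continuousAt.continuousWithinAt)
    (fun c hc => ?_) (fun c hc => ?_) (Set.left_mem_Icc.2 hC) (Set.right_mem_Icc.2 hC) hC
  · rw [interior_Icc] at hc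
    exact (hd c hc.1.le).differentiableAt.differentiableWithinAt
  · rw [interior_Icc] at hc
    rw [(hd c hc.1.le).deriv]
    have hc0 : 0 < c := by linarith [hc.1]
    have hW := pairProd_pos hβ0 hE hc0
    have hw : 0 < β * E + c := by positivity
    have hcond := h c hc.1.le hc.2.le
    unfold edgeCond at hcond
    have key : 2 * (1 / (β * E + c)) - ((1 + β) * E + 2 * β * c) / pairProd β E c -
        Q * (1 - β) / 4 * ((2 * c * pairProd β E c - (c ^ 2 - 4) * ((1 + β) * E + 2 * β * c)) /
          pairProd β E c ^ 2) =
        (1 - β) * (4 * ((2 + β) * E ^ 2 + (1 + 2 * β) * E * c + 2 * (1 - β)) * pairProd β E c -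
          Q * (β * E + c) * (E * c + 2 * (1 + β)) * ((1 + β) * c + 2 * E)) /
          (4 * (β * E + c) * pairProd β E c ^ 2) := by
      have e1 : 2 * c * pairProd β E c - (c ^ 2 - 4) * ((1 + β) * E + 2 * β * c) =
        (E * c + 2 * (1 + β)) * ((1 + β) * c + 2 * E) := by unfold pairProd; ring
      have e2 : 2 * (1 / (β * E + c)) - ((1 + β) * E + 2 * β * c) / pairProd β E c =
        (1 - β) * ((2 + β) * E ^ 2 + (1 + 2 * β) * E * c + 2 * (1 - β)) /
          ((β * E + c) * pairProd β E c) := by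
        rw [eq_div_iff (by positivity)]
        field_simp
        unfold pairProd; ring
      rw [e1, e2]
      field_simp
    rw [key]
    exact div_nonneg (mul_nonneg (by linarith) (by linarith)) (by positivity)

theorem logGap_vert_anti {β Q E x C : ℝ} (hβ0 : 0 ≤ β) (hβ1 : β ≤ 1) (hx : 0 < x) (hxE : x ≤ E)
    (hC : 2 ≤ C) (h : ∀ y, x ≤ y → y ≤ E → vertCond β Q y C) :
    logGap β Q E C ≤ logGap β Q x C := by
  have hd : ∀ y : ℝ, x ≤ y → _ := fun y hy =>
    hasDerivAt_logGap_x (β := β) (Q := Q) (x := y) (C := C) hβ0 (by linarith) (by linarith)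
  refine antitoneOn_of_deriv_nonpos (convex_Icc x E) (f := fun y => logGap β Q y C)
    (fun c hc => (hd c hc.1).continuousAt.continuousWithinAt)
    (fun c hc => ?_) (fun c hc => ?_) (Set.left_mem_Icc.2 hxE) (Set.right_mem_Icc.2 hxE) hxE
  · rw [interior_Icc] at hc
    exact (hd c hc.1.le).differentiableAt.differentiableWithinAt
  · rw [interior_Icc] at hc
    rw [(hd c hc.1.le).deriv]
    have hc0 : 0 < c := by linarith [hc.1]
    have hW := pairProd_pos (C := C) hβ0 hc0 (by linarith)
    have hw : 0 < β * c + C := by positivity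
    have hcond := h c hc.1.le hc.2.le
    unfold vertCond at hcond
    have key : 2 * (β / (β * c + C)) - (2 * c + (1 + β) * C) / pairProd β c C -
        Q * (1 - β) / 4 * ((0 * pairProd β c C - (C ^ 2 - 4) * (2 * c + (1 + β) * C)) /
          pairProd β c C ^ 2) =
        (1 - β) * (Q * (C ^ 2 - 4) * (2 * c + (1 + β) * C) * (β * c + C) - 4 * pairProd β c C *
          ((2 + β) * c * C + (1 + 2 * β) * C ^ 2 - 2 * β * (1 - β))) /
          (4 * (β * c + C) * pairProd β c C ^ 2) := by
      have e2 : 2 * (β / (β * c + C)) - (2 * c + (1 + β) * C) / pairProd β c C =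
        -((1 - β) * ((2 + β) * c * C + (1 + 2 * β) * C ^ 2 - 2 * β * (1 - β))) /
          ((β * c + C) * pairProd β c C) := by
        rw [eq_div_iff (by positivity)]
        field_simp
        unfold pairProd; ring
      rw [e2]
      field_simp
      ring
    rw [key]
    exact div_nonpos_of_nonpos_of_nonneg
      (mul_nonpos_of_nonneg_of_nonpos (by linarith) (by linarith)) (by positivity)

theorem log_sq_le {R : ℝ} (hR : 0 < R) : Real.log R ^ 2 ≤ R + 1 / R - 2 := by
  have hsinh : ∀ t : ℝ, t ^ 2 ≤ Real.sinh t ^ 2 := by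
    intro t
    rcases le_total 0 t with ht | ht
    · exact pow_le_pow_left₀ ht (Real.self_le_sinh_iff.2 ht) 2
    · have := pow_le_pow_left₀ (neg_nonneg.2 ht) (Real.self_le_sinh_iff.2 (neg_nonneg.2 ht)) 2
      simpa [Real.sinh_neg] using this
  have h := hsinh (Real.log R / 2)
  have h2 : Real.cosh (Real.log R) = 1 + 2 * Real.sinh (Real.log R / 2) ^ 2 := by
    have := Real.cosh_two_mul (Real.log R / 2)
    rw [Real.cosh_sq] at this
    rw [show 2 * (Real.log R / 2) = Real.log R by ring] at this
    linarith
  have h3 : Real.cosh (Real.log R) = (R + 1 / R) / 2 := by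
    rw [Real.cosh_log hR, one_div]
  nlinarith

theorem log_sub_log_sq_le {a b : ℝ} (ha : 0 < a) (hb : 0 < b) :
    (Real.log a - Real.log b) ^ 2 ≤ (a - b) ^ 2 / (a * b) := by
  rw [← Real.log_div ha.ne' hb.ne']
  refine (log_sq_le (div_pos ha hb)).trans (le_of_eq ?_)
  field_simp
  ring

/-- The estimate for normalised weights `(x, r, 1/r)` with `1 ≤ r`. -/
theorem child_log_bound_normalized {β Q E x r : ℝ} (hβ0 : 0 ≤ β) (hβ1 : β < 1) (hQ : 0 ≤ Q)
    (hE : 1 ≤ E) (hr : 1 ≤ r) (hrx : r ^ 3 ≤ E ^ 2 * x) (hxE : x ≤ E)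
    (hedge : ∀ c, 2 ≤ c → c ≤ E + 1 / E → edgeCond β Q E c)
    (hvert : ∀ r x, 1 ≤ r → r ^ 3 ≤ E ^ 2 * x → x ≤ E → vertCond β Q x (r + 1 / r)) :
    Q * (Real.log (x + r + β * (1 / r)) - Real.log (x + β * r + 1 / r)) ^ 2 ≤
      4 * (1 - β) * (2 * Real.log ((E + 1 + β) / (β * E + 2)) +
        2 * Real.log (β * x + (r + 1 / r)) - Real.log (x + β * r + 1 / r) -
          Real.log (x + r + β * (1 / r))) := by
  have hE0 : 0 < E := by linarith
  have hr0 : 0 < r := by linarith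
  have hx : 0 < x := by
    by_contra hx
    have : 1 ≤ r ^ 3 := one_le_pow₀ hr
    nlinarith [sq_nonneg E, mul_nonneg (sq_nonneg E) (by linarith : 0 ≤ -x)]
  have hrE : r ≤ E := by
    have : r ^ 3 ≤ E ^ 3 := by nlinarith [sq_nonneg E]
    exact le_of_pow_le_pow_left₀ (by norm_num) hE0.le this
  have hs : r * (1 / r) = 1 := by field_simp
  set s := 1 / r with hs_def
  have hs0 : 0 < s := by positivity
  have hC2 : 2 ≤ r + s := by nlinarith [sq_nonneg (r - s)]
  have hCE : r + s ≤ E + 1 / E := by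
    have h1 : E * (1 / E) = 1 := by field_simp
    have h2 : 0 < 1 / E := by positivity
    set z := 1 / E
    have h3 : (E + z) - (r + s) = (E - r) * (1 - z * s) := by
      linear_combination s * h1 - z * hs
    have h4 : z * s ≤ 1 := by
      have : z ≤ 1 := by nlinarith
      have : s ≤ 1 := by nlinarith
      nlinarith
    nlinarith [mul_nonneg (sub_nonneg.2 hrE) (sub_nonneg.2 h4)]
  have g1 := logGap_edge_mono hβ0 hβ1.le hE0 hC2 (fun c hc hc' => hedge c hc (hc'.trans hCE))
  have g2 := logGap_vert_anti (Q := Q) hβ0 hβ1.le hx hxE hC2 (fun y hy hy' =>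
    hvert r y hr (hrx.trans (mul_le_mul_of_nonneg_left hy (sq_nonneg E))) hy')
  have hw2 : 0 < x + β * r + s := by positivity
  have hw3 : 0 < x + r + β * s := by positivity
  have hprod : pairProd β x (r + s) = (x + β * r + s) * (x + r + β * s) := by
    unfold pairProd
    linear_combination (-(1 - β) ^ 2) * hs
  have hend : logGap β Q E 2 = -(2 * Real.log ((E + 1 + β) / (β * E + 2))) := by
    unfold logGap
    rw [show pairProd β E 2 = (E + 1 + β) ^ 2 by unfold pairProd; ring,
      Real.log_div (by positivity) (by positivity), Real.log_pow]
    norm_num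
    ring
  have hlog := log_sub_log_sq_le hw3 hw2
  have hsq : (x + r + β * s - (x + β * r + s)) ^ 2 = (1 - β) ^ 2 * ((r + s) ^ 2 - 4) := by
    linear_combination (-4 * (1 - β) ^ 2) * hs
  rw [hsq, mul_comm (x + r + β * s)] at hlog
  have hmain : -(2 * Real.log ((E + 1 + β) / (β * E + 2))) ≤ logGap β Q x (r + s) := by linarith
  unfold logGap at hmain
  rw [hprod, Real.log_mul hw2.ne' hw3.ne'] at hmain
  rw [mul_div_assoc] at hlog
  set F := ((r + s) ^ 2 - 4) / ((x + β * r + s) * (x + r + β * s))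
  have h1 := mul_le_mul_of_nonneg_left hlog hQ
  have hb : 0 ≤ 1 - β := by linarith
  have h2 := mul_le_mul_of_nonneg_left hmain (mul_nonneg (by norm_num : (0 : ℝ) ≤ 4) hb)
  nlinarith

theorem child_log_bound {β Q E p₁ p₂ p₃ : ℝ} (hβ0 : 0 ≤ β) (hβ1 : β < 1) (hQ : 0 ≤ Q)
    (hE : 1 ≤ E) (h₁ : 0 < p₁) (h₂ : 0 < p₂) (h₃ : 0 < p₃)
    (hT₁ : p₁ ^ 2 ≤ E ^ 2 * (p₂ * p₃)) (hT₂ : p₂ ^ 2 ≤ E ^ 2 * (p₁ * p₃))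
    (hT₃ : p₃ ^ 2 ≤ E ^ 2 * (p₁ * p₂))
    (hedge : ∀ c, 2 ≤ c → c ≤ E + 1 / E → edgeCond β Q E c)
    (hvert : ∀ r x, 1 ≤ r → r ^ 3 ≤ E ^ 2 * x → x ≤ E → vertCond β Q x (r + 1 / r)) :
    Q * (Real.log (p₁ + p₂ + β * p₃) - Real.log (p₁ + β * p₂ + p₃)) ^ 2 ≤
      4 * (1 - β) * (2 * Real.log ((E + 1 + β) / (β * E + 2)) +
        2 * Real.log (β * p₁ + p₂ + p₃) - Real.log (p₁ + β * p₂ + p₃) -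
          Real.log (p₁ + p₂ + β * p₃)) := by
  wlog h : p₃ ≤ p₂ generalizing p₂ p₃ with H
  · have := H h₃ h₂ (by linarith) (by linarith) (by linarith) (by linarith)
    rw [add_right_comm p₁ p₃, add_right_comm p₁ (β * p₃), add_right_comm (β * p₁)] at this
    rw [show (Real.log (p₁ + p₂ + β * p₃) - Real.log (p₁ + β * p₂ + p₃)) ^ 2 =
      (Real.log (p₁ + β * p₂ + p₃) - Real.log (p₁ + p₂ + β * p₃)) ^ 2 by ring]
    linarith
  obtain ⟨l, hl0, hll⟩ : ∃ l, 0 < l ∧ l * l = p₂ * p₃ :=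
    ⟨√(p₂ * p₃), Real.sqrt_pos.2 (by positivity), Real.mul_self_sqrt (by positivity)⟩
  obtain ⟨r, rfl⟩ : ∃ r, p₂ = l * r := ⟨p₂ / l, by field_simp⟩
  have hr0 : 0 < r := pos_of_mul_pos_right h₂ hl0.le
  obtain rfl : p₃ = l * (1 / r) := by
    field_simp
    have : l * (p₃ * r) = l * l := by rw [hll]; ring
    linarith [mul_left_cancel₀ hl0.ne' this]
  obtain ⟨x, rfl⟩ : ∃ x, p₁ = l * x := ⟨p₁ / l, by field_simp⟩
  have hx0 : 0 < x := pos_of_mul_pos_right h₁ hl0.le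
  have hr : 1 ≤ r := by
    have h' := le_of_mul_le_mul_left h hl0
    rw [div_le_iff₀ hr0] at h'
    nlinarith
  have hs : r * (1 / r) = 1 := by field_simp
  have hxE : x ≤ E := by
    have h1 : x ^ 2 * l ^ 2 ≤ E ^ 2 * l ^ 2 := by
      calc x ^ 2 * l ^ 2 = (l * x) ^ 2 := by ring
        _ ≤ _ := hT₁
        _ = E ^ 2 * l ^ 2 * (r * (1 / r)) := by ring
        _ = _ := by rw [hs, mul_one]
    exact le_of_sq_le_sq (le_of_mul_le_mul_right h1 (by positivity)) (by linarith)
  have hrx : r ^ 3 ≤ E ^ 2 * x := by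
    have h1 : r ^ 3 * l ^ 2 ≤ E ^ 2 * x * l ^ 2 := by
      calc r ^ 3 * l ^ 2 = (l * r) ^ 2 * r := by ring
        _ ≤ E ^ 2 * (l * x * (l * (1 / r))) * r := by gcongr
        _ = E ^ 2 * x * l ^ 2 * (r * (1 / r)) := by ring
        _ = _ := by rw [hs, mul_one]
    exact le_of_mul_le_mul_right h1 (by positivity)
  have key := child_log_bound_normalized hβ0 hβ1 hQ hE hr hrx hxE hedge hvert
  have hs0 : 0 < 1 / r := by positivity
  set s := 1 / r
  rw [show l * x + l * r + β * (l * s) = l * (x + r + β * s) by ring,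
    show l * x + β * (l * r) + l * s = l * (x + β * r + s) by ring,
    show β * (l * x) + l * r + l * s = l * (β * x + (r + s)) by ring,
    Real.log_mul hl0.ne' (by positivity), Real.log_mul hl0.ne' (by positivity),
    Real.log_mul hl0.ne' (by positivity)]
  convert key using 2 <;> ring

theorem edgeCond_of_edgeSlack {β κ E : ℝ} (hE : 1 ≤ E)
    (h : ∀ θ, 0 ≤ θ → θ ≤ 1 → 0 ≤ edgeSlack β κ (E - 1) θ) :
    ∀ c, 2 ≤ c → c ≤ E + 1 / E → edgeCond β (2 + β + (1 - β) * κ) E c := by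
  intro c hc hcE
  have hE0 : 0 < E := by linarith
  have hcE' : c * E ≤ E ^ 2 + 1 := by
    have := mul_le_mul_of_nonneg_right hcE hE0.le
    rwa [add_mul, one_div_mul_cancel hE0.ne', ← sq] at this
  obtain ⟨θ, h0, h1, hθ⟩ : ∃ θ, 0 ≤ θ ∧ θ ≤ 1 ∧ c * E = 2 * E + (E - 1) ^ 2 * θ := by
    rcases hE.eq_or_lt with rfl | hE1
    · exact ⟨0, le_rfl, zero_le_one, by linarith⟩
    · have hp : 0 < (E - 1) ^ 2 := by have := sub_pos.2 hE1; positivity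
      refine ⟨(c * E - 2 * E) / (E - 1) ^ 2, div_nonneg (by nlinarith) hp.le, ?_, ?_⟩
      · rw [div_le_one hp]; nlinarith
      · rw [mul_div_cancel₀ _ hp.ne']; ring
  have key := h θ h0 h1
  unfold edgeSlack at key
  rw [add_sub_cancel, ← hθ] at key
  unfold edgeCond pairProd
  have hE2 : 0 < E ^ 2 := by positivity
  refine le_of_mul_le_mul_right ?_ hE2
  nlinarith

set_option maxHeartbeats 800000 in
theorem vertCond_of_vertSlack {β κ v r x : ℝ} (hβ0 : 0 ≤ β) (hβ1 : β ≤ 1) (hκ : 0 ≤ κ) (hv : 0 < v)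
    (hr : 1 ≤ r) (hx : r ^ 3 * v ≤ x) (h : 0 ≤ vertSlack β κ v (r ^ 2)) :
    vertCond β (2 + β + (1 - β) * κ) x (r + 1 / r) := by
  have hr0 : 0 < r := by linarith
  have hb : 0 ≤ 1 - β := by linarith
  have hs : r * (1 / r) = 1 := by field_simp
  have hs0 : 0 < 1 / r := by positivity
  have hCr : (r + 1 / r) * r = r ^ 2 + 1 := by linear_combination hs
  have hC2 : 2 ≤ r + 1 / r := by nlinarith [sq_nonneg (r - 1 / r)]
  set C := r + 1 / r
  have hC0 : 0 < C := by linarith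
  have hS : 0 ≤ C ^ 2 - 4 := by nlinarith only [hC2]
  have hx0 : 0 < r ^ 3 * v := by positivity
  have hxp : 0 < x := by linarith
  unfold vertCond
  set N := (2 + β) * x * C + (1 + 2 * β) * C ^ 2 - 2 * β * (1 - β) with hN
  set W := pairProd β x C with hW
  have hVw : (2 * x + (1 + β) * C) * (β * x + C) = (1 - β) * N + 2 * β * W := by
    rw [hN, hW]; unfold pairProd; ring
  set N₀ := (2 + β) * (r ^ 3 * v) * C + (1 + 2 * β) * C ^ 2 - 2 * β * (1 - β) with hN₀
  set W₀ := pairProd β (r ^ 3 * v) C with hW₀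
  have hW₀p : 0 < W₀ := pairProd_pos hβ0 hx0 hC0
  have hN₀p : 0 < N₀ := by
    have : 0 < (2 + β) * (r ^ 3 * v) * C := by positivity
    rw [hN₀]; nlinarith
  have hWW : W₀ ≤ W := by
    rw [hW, hW₀]; unfold pairProd; gcongr
  have hNN : N₀ ≤ N := by
    rw [hN, hN₀]; gcongr
  have hWp : 0 < W := by linarith
  have hNp : 0 < N := by linarith
  have eW : r ^ 2 * W₀ = (r ^ 2) ^ 4 * v ^ 2 + (1 + β) * (r ^ 2) ^ 2 * (r ^ 2 + 1) * v +
      β * (r ^ 2 + 1) ^ 2 + (1 - β) ^ 2 * r ^ 2 := by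
    rw [hW₀, ← hCr]; unfold pairProd; ring
  have eN : r ^ 2 * N₀ = (2 + β) * (r ^ 2) ^ 2 * (r ^ 2 + 1) * v + (1 + 2 * β) * (r ^ 2 + 1) ^ 2 -
      2 * β * (1 - β) * r ^ 2 := by
    rw [hN₀, ← hCr]; ring
  have eS : r ^ 2 * (C ^ 2 - 4) = (r ^ 2 - 1) ^ 2 := by
    linear_combination (C * r + r ^ 2 + 1) * hCr
  unfold vertSlack at h
  rw [← eW, ← eN, ← eS] at h
  set Q := 2 + β + (1 - β) * κ
  have hQ : 0 ≤ Q := by positivity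
  set S := C ^ 2 - 4
  have h₀ : Q * S * ((1 - β) * N₀ + 2 * β * W₀) ≤ 4 * W₀ * N₀ := by
    have hr4 : 0 < r ^ 4 := by positivity
    refine le_of_mul_le_mul_left ?_ hr4
    linarith
  have h₁ : Q * S * (1 - β) / W₀ + Q * S * (2 * β) / N₀ ≤ 4 := by
    rw [div_add_div _ _ hW₀p.ne' hN₀p.ne', div_le_iff₀ (by positivity)]
    linarith
  have h₂ : Q * S * (1 - β) / W + Q * S * (2 * β) / N ≤ 4 := by
    refine le_trans ?_ h₁
    gcongr
  rw [div_add_div _ _ hWp.ne' hNp.ne', div_le_iff₀ (by positivity)] at h₂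
  rw [mul_assoc _ _ (β * x + C), hVw]
  linarith

theorem edgeCond_mono {β Q Q' E c : ℝ} (hβ0 : 0 ≤ β) (hE : 0 < E) (hc : 0 < c) (hQ : Q ≤ Q')
    (h : edgeCond β Q' E c) : edgeCond β Q E c := by
  unfold edgeCond at *
  refine le_trans ?_ h
  gcongr

theorem vertCond_mono {β Q Q' x c : ℝ} (hβ0 : 0 ≤ β) (hx : 0 < x) (hc : 2 ≤ c) (hQ : Q ≤ Q')
    (h : vertCond β Q' x c) : vertCond β Q x c := by
  unfold vertCond at *
  refine le_trans ?_ h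
  have : 0 ≤ c ^ 2 - 4 := by nlinarith
  gcongr

/-- The child estimate holds with constant `κ` for all weights in the region of parameter `E`. -/
def ChildBound (β κ E : ℝ) : Prop :=
  ∀ p₁ p₂ p₃ : ℝ, 0 < p₁ → 0 < p₂ → 0 < p₃ → p₁ ^ 2 ≤ E ^ 2 * (p₂ * p₃) →
    p₂ ^ 2 ≤ E ^ 2 * (p₁ * p₃) → p₃ ^ 2 ≤ E ^ 2 * (p₁ * p₂) →
    (2 + β + (1 - β) * κ) *
        (Real.log (p₁ + p₂ + β * p₃) - Real.log (p₁ + β * p₂ + p₃)) ^ 2 ≤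
      4 * (1 - β) * (2 * Real.log ((E + 1 + β) / (β * E + 2)) +
        2 * Real.log (β * p₁ + p₂ + p₃) - Real.log (p₁ + β * p₂ + p₃) -
          Real.log (p₁ + p₂ + β * p₃))

theorem childBound_of_slack {β κ κ₁ κ₂ v E : ℝ} (hβ0 : 0 ≤ β) (hβ1 : β < 1) (hE : 1 ≤ E)
    (hκ : 0 ≤ κ) (h₁ : κ ≤ κ₁) (h₂ : κ ≤ κ₂) (hv : 0 < v) (hvE : v * E ^ 2 ≤ 1)
    (hedge : ∀ θ, 0 ≤ θ → θ ≤ 1 → 0 ≤ edgeSlack β κ₁ (E - 1) θ)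
    (hvert : ∀ u, 1 ≤ u → 0 ≤ vertSlack β κ₂ v u) : ChildBound β κ E := by
  have hb : 0 < 1 - β := by linarith
  intro p₁ p₂ p₃ hp₁ hp₂ hp₃ hT₁ hT₂ hT₃
  refine child_log_bound hβ0 hβ1 (by positivity) hE hp₁ hp₂ hp₃ hT₁ hT₂ hT₃ ?_ ?_
  · intro c hc hcE
    refine edgeCond_mono hβ0 (by linarith) (by linarith) ?_ (edgeCond_of_edgeSlack hE hedge c hc hcE)
    gcongr
  · intro r x hr hrx hxE
    have hr0 : 0 < r := by linarith
    have hrv : r ^ 3 * v ≤ x := by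
      have hx : 0 ≤ x := by
        by_contra hx
        nlinarith [pow_pos hr0 3, mul_nonneg (sq_nonneg E) (by linarith : 0 ≤ -x)]
      nlinarith [mul_le_mul_of_nonneg_left hrx hv.le, mul_le_mul_of_nonneg_right hvE hx]
    have hx : 0 < x := lt_of_lt_of_le (by positivity) hrv
    have hC : 2 ≤ r + 1 / r := by
      have hs : r * (1 / r) = 1 := by field_simp
      nlinarith [sq_nonneg (r - 1 / r), (by positivity : 0 < 1 / r)]
    refine vertCond_mono hβ0 hx hC ?_ (vertCond_of_vertSlack hβ0 hβ1.le (by linarith) hv hr hrv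
      (hvert (r ^ 2) (one_le_pow₀ hr)))
    gcongr

theorem childBound_small {β E : ℝ} (hβ0 : 0 ≤ β) (hβ1 : β < 1) (hE : 1 ≤ E) (hE2 : E ≤ 2) :
    ChildBound β (1 + 17 / 8 * (E - 1)) E := by
  have h₁ := fun θ h0 h1 => edgeSlack_nonneg_of_le_one (θ := θ) hβ0 hβ1.le
    (sub_nonneg.2 hE) (by linarith) h0 h1
  rcases le_total β (1 / 2) with h | h
  · exact childBound_of_slack (v := 1 / 8) hβ0 hβ1 hE (by linarith) le_rfl
      (by linarith : _ ≤ 25 / 8 + 4 * β) (by norm_num) (by nlinarith) h₁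
      (fun u hu => vertSlack_nonneg_of_le_half hβ0 h hu)
  · exact childBound_of_slack (v := 1 / 16) hβ0 hβ1 hE (by linarith) le_rfl
      (by linarith : _ ≤ 25 / 8 + 4 * β) (by norm_num) (by nlinarith) h₁
      (fun u hu => vertSlack_nonneg_of_two_fifths_le (by linarith) hβ1.le hu)

theorem childBound_middle {β E : ℝ} (hβ0 : 0 ≤ β) (hβ1 : β < 1) (hE : 2 ≤ E)
    (hE2 : E ≤ 2 + 2 * β) : ChildBound β (25 / 8 + 4 * β) E := by
  have h₁ := fun θ h0 h1 => edgeSlack_nonneg_of_one_le (θ := θ) (e := E - 1) hβ0 hβ1.le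
    (by linarith) h0 h1
  rcases le_total β (2 / 5) with h | h
  · exact childBound_of_slack (v := 1 / 8) hβ0 hβ1 (by linarith) (by linarith) le_rfl le_rfl
      (by norm_num) (by nlinarith) h₁
      (fun u hu => vertSlack_nonneg_of_le_half hβ0 (by linarith) hu)
  · exact childBound_of_slack (v := 1 / 16) hβ0 hβ1 (by linarith) (by linarith) le_rfl le_rfl
      (by norm_num) (by nlinarith) h₁
      (fun u hu => vertSlack_nonneg_of_two_fifths_le (by linarith) hβ1.le hu)

theorem childBound_large {β E : ℝ} (hβ0 : 0 ≤ β) (hβ1 : β < 1) (hE : 2 ≤ E)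
    (hE2 : E ≤ 7 / 2 ∨ 1 / 4 ≤ β ∧ E ≤ 9 / 2) : ChildBound β (3 + β) E := by
  have h₁ := fun θ h0 h1 => edgeSlack_nonneg_of_one_le (θ := θ) (e := E - 1) hβ0 hβ1.le
    (by linarith) h0 h1
  rcases hE2 with h | ⟨hβ, h⟩
  · exact childBound_of_slack (v := 2 / 25) hβ0 hβ1 (by linarith) (by linarith) (by linarith)
      le_rfl (by norm_num) (by nlinarith) h₁
      (fun u hu => vertSlack_nonneg_crude hβ0 hβ1.le hu)
  · exact childBound_of_slack (v := 1 / 21) hβ0 hβ1 (by linarith) (by linarith) (by linarith)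
      le_rfl (by norm_num) (by nlinarith) h₁
      (fun u hu => vertSlack_nonneg_crude_of_quarter_le hβ hβ1.le hu)

theorem log_prod_sub_bound {ι : Type*} [Fintype ι] {β κ E : ℝ} (hβ0 : 0 ≤ β) (hβ1 : β < 1)
    (hκ : 0 ≤ κ) (hd : (Fintype.card ι : ℝ) * (1 - β) ≤ 2 + β) (hCB : ChildBound β κ E)
    {p₁ p₂ p₃ : ι → ℝ} (h₁ : ∀ i, 0 < p₁ i) (h₂ : ∀ i, 0 < p₂ i) (h₃ : ∀ i, 0 < p₃ i)
    (hT₁ : ∀ i, p₁ i ^ 2 ≤ E ^ 2 * (p₂ i * p₃ i)) (hT₂ : ∀ i, p₂ i ^ 2 ≤ E ^ 2 * (p₁ i * p₃ i))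
    (hT₃ : ∀ i, p₃ i ^ 2 ≤ E ^ 2 * (p₁ i * p₂ i)) :
    (2 + β + (1 - β) * κ) * (Real.log (∏ i, (p₁ i + p₂ i + β * p₃ i)) -
        Real.log (∏ i, (p₁ i + β * p₂ i + p₃ i))) ^ 2 ≤
      4 * (2 + β) * (2 * (Fintype.card ι * Real.log ((E + 1 + β) / (β * E + 2))) +
        2 * Real.log (∏ i, (β * p₁ i + p₂ i + p₃ i)) - Real.log (∏ i, (p₁ i + β * p₂ i + p₃ i)) -
          Real.log (∏ i, (p₁ i + p₂ i + β * p₃ i))) := by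
  have hb : 0 < 1 - β := by linarith
  have w₁ : ∀ i, 0 < β * p₁ i + p₂ i + p₃ i := fun i => by
    have := h₁ i; have := h₂ i; have := h₃ i; positivity
  have w₂ : ∀ i, 0 < p₁ i + β * p₂ i + p₃ i := fun i => by
    have := h₁ i; have := h₂ i; have := h₃ i; positivity
  have w₃ : ∀ i, 0 < p₁ i + p₂ i + β * p₃ i := fun i => by
    have := h₁ i; have := h₂ i; have := h₃ i; positivity
  rw [Real.log_prod (fun i _ => (w₁ i).ne'), Real.log_prod (fun i _ => (w₂ i).ne'),
    Real.log_prod (fun i _ => (w₃ i).ne')]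
  set L₁ := fun i => Real.log (β * p₁ i + p₂ i + p₃ i) with hL₁
  set L₂ := fun i => Real.log (p₁ i + β * p₂ i + p₃ i) with hL₂
  set L₃ := fun i => Real.log (p₁ i + p₂ i + β * p₃ i) with hL₃
  set l := Real.log ((E + 1 + β) / (β * E + 2)) with hl
  set Q := 2 + β + (1 - β) * κ with hQ
  have hQ0 : 0 < Q := by positivity
  have hc : ∀ i, Q * (L₃ i - L₂ i) ^ 2 ≤ 4 * (1 - β) * (2 * l + 2 * L₁ i - L₂ i - L₃ i) :=
    fun i => hCB _ _ _ (h₁ i) (h₂ i) (h₃ i) (hT₁ i) (hT₂ i) (hT₃ i)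
  have hsum := Finset.sum_le_sum (fun i (_ : i ∈ Finset.univ) => hc i)
  rw [← Finset.mul_sum, ← Finset.mul_sum] at hsum
  have hCS : (∑ i, (L₃ i - L₂ i)) ^ 2 ≤ Fintype.card ι * ∑ i, (L₃ i - L₂ i) ^ 2 := by
    simpa using sq_sum_le_card_mul_sum_sq (s := Finset.univ) (f := fun i => L₃ i - L₂ i)
  have e₁ : ∑ i, (2 * l + 2 * L₁ i - L₂ i - L₃ i) =
      2 * (Fintype.card ι * l) + 2 * ∑ i, L₁ i - ∑ i, L₂ i - ∑ i, L₃ i := by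
    simp only [Finset.sum_sub_distrib, Finset.sum_add_distrib, ← Finset.mul_sum, Finset.sum_const,
      Finset.card_univ, nsmul_eq_mul]
  rw [Finset.sum_sub_distrib] at hCS
  rw [e₁] at hsum
  set G := 2 * (Fintype.card ι * l) + 2 * ∑ i, L₁ i - ∑ i, L₂ i - ∑ i, L₃ i
  have hss : 0 ≤ ∑ i, (L₃ i - L₂ i) ^ 2 := Finset.sum_nonneg fun i _ => sq_nonneg _
  have hG : 0 ≤ G := by
    have : 0 ≤ 4 * (1 - β) * G := le_trans (by positivity) hsum
    exact nonneg_of_mul_nonneg_right this (by positivity)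
  calc Q * (∑ i, L₃ i - ∑ i, L₂ i) ^ 2
      ≤ Q * (Fintype.card ι * ∑ i, (L₃ i - L₂ i) ^ 2) := by gcongr
    _ = Fintype.card ι * (Q * ∑ i, (L₃ i - L₂ i) ^ 2) := by ring
    _ ≤ Fintype.card ι * (4 * (1 - β) * G) := by gcongr
    _ = 4 * (Fintype.card ι * (1 - β)) * G := by ring
    _ ≤ 4 * (2 + β) * G := by gcongr

/-- Reduction of the two-step bound to an inequality in the mean `Y` and the dispersion `T`. -/
theorem parent_bound {β κ l ρ k x₁ x₂ x₃ : ℝ} (hβ0 : 0 ≤ β) (hβ1 : β < 1)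
    (hκ : 0 ≤ κ) (h₁ : 0 < x₁) (h₂ : 0 < x₂) (h₃ : 0 < x₃) (hρ0 : 0 < ρ) (hρ : l ≤ Real.log ρ)
    (h : (2 + β + (1 - β) * κ) * (Real.log x₃ - Real.log x₂) ^ 2 ≤
      4 * (2 + β) * (2 * l + 2 * Real.log x₁ - Real.log x₂ - Real.log x₃))
    (hf : ∀ Y T : ℝ, 0 < Y → 0 ≤ T → T < 1 → Y ≤ ρ * (1 - T) ^ (κ * (1 - β) / (2 * (2 + β))) →
      (β + 2 * Y) ^ 2 ≤ k ^ 2 * ((1 + (1 + β) * Y) ^ 2 - (1 - β) ^ 2 * T * Y ^ 2)) :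
    (β * x₁ + x₂ + x₃) ^ 2 ≤ k ^ 2 * ((x₁ + β * x₂ + x₃) * (x₁ + x₂ + β * x₃)) := by
  set Y := (x₂ + x₃) / (2 * x₁) with hY
  have hY0 : 0 < Y := by positivity
  set T := (x₃ - x₂) ^ 2 / (x₂ + x₃) ^ 2 with hT
  have hT0 : 0 ≤ T := by positivity
  have hT1 : 1 - T = 4 * x₂ * x₃ / (x₂ + x₃) ^ 2 := by
    rw [hT]; field_simp; ring
  have hT1p : 0 < 1 - T := by rw [hT1]; positivity
  have key := hf Y T hY0 hT0 (by linarith) ?_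
  · have e1 : β + 2 * Y = (β * x₁ + x₂ + x₃) / x₁ := by rw [hY]; field_simp; ring
    have e2 : (1 + (1 + β) * Y) ^ 2 - (1 - β) ^ 2 * T * Y ^ 2 =
        (x₁ + β * x₂ + x₃) * (x₁ + x₂ + β * x₃) / x₁ ^ 2 := by
      rw [hY, hT]; field_simp; ring
    rw [e1, e2, div_pow, ← mul_div_assoc] at key
    exact (div_le_div_iff_of_pos_right (by positivity)).1 key
  · have hcosh : Real.cosh ((Real.log x₃ - Real.log x₂) / 2) ^ 2 = 1 / (1 - T) := by
      have h2 := Real.cosh_two_mul ((Real.log x₃ - Real.log x₂) / 2)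
      rw [Real.sinh_sq, show 2 * ((Real.log x₃ - Real.log x₂) / 2) = Real.log (x₃ / x₂) by
        rw [Real.log_div h₃.ne' h₂.ne']; ring, Real.cosh_log (by positivity)] at h2
      have h3 : Real.cosh ((Real.log x₃ - Real.log x₂) / 2) ^ 2 =
        ((x₃ / x₂ + (x₃ / x₂)⁻¹) / 2 + 1) / 2 := by linarith
      rw [h3, hT1]; field_simp; ring
    have hle : -Real.log (1 - T) ≤ (Real.log x₃ - Real.log x₂) ^ 2 / 4 := by
      have h2 := Real.cosh_le_exp_half_sq ((Real.log x₃ - Real.log x₂) / 2)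
      have h3 := pow_le_pow_left₀ (Real.cosh_pos _).le h2 2
      rw [hcosh, ← Real.exp_nat_mul] at h3
      have h4 := Real.log_le_log (by positivity) h3
      rw [Real.log_exp, one_div, Real.log_inv] at h4
      refine h4.trans (le_of_eq ?_)
      push_cast; ring
    have hlogT : Real.log (1 - T) =
        Real.log x₂ + Real.log x₃ + 2 * Real.log 2 - 2 * Real.log (x₂ + x₃) := by
      rw [hT1, Real.log_div (by positivity) (by positivity), Real.log_mul (by positivity) h₃.ne',
        Real.log_mul (by positivity) h₂.ne', Real.log_pow, show (4 : ℝ) = 2 ^ 2 by norm_num,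
        Real.log_pow]
      push_cast; ring
    have hlogY : Real.log Y = Real.log (x₂ + x₃) - Real.log 2 - Real.log x₁ := by
      rw [hY, Real.log_div (by positivity) (by positivity), Real.log_mul (by positivity) h₁.ne']
      ring
    rw [← Real.log_le_log_iff hY0 (by positivity), Real.log_mul hρ0.ne' (by positivity),
      Real.log_rpow hT1p]
    have hb : 0 < 1 - β := by linarith
    have hQ0 : 0 < 2 + β + (1 - β) * κ := by positivity
    have h5 := mul_le_mul_of_nonneg_left hle hQ0.le
    have h6 : (2 + β + (1 - β) * κ) * -Real.log (1 - T) ≤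
        (2 + β) * (2 * l + 2 * Real.log x₁ - Real.log x₂ - Real.log x₃) := by linarith
    have h7 : 2 * l + 2 * Real.log x₁ - Real.log x₂ - Real.log x₃ =
      2 * l - 2 * Real.log Y - Real.log (1 - T) := by rw [hlogT, hlogY]; ring
    rw [h7] at h6
    have h8 : 2 * (2 + β) * Real.log Y ≤ 2 * (2 + β) * l + (1 - β) * κ * Real.log (1 - T) := by
      linarith
    have h9 : κ * (1 - β) / (2 * (2 + β)) * Real.log (1 - T) =
      ((1 - β) * κ * Real.log (1 - T)) / (2 * (2 + β)) := by ring
    rw [h9]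
    have h10 : Real.log Y ≤ l + ((1 - β) * κ * Real.log (1 - T)) / (2 * (2 + β)) := by
      rw [← sub_le_iff_le_add', le_div_iff₀ (by positivity)]
      linarith
    linarith

theorem fine_quadratic {β κ z k y T : ℝ} (hβ0 : 0 ≤ β) (hβ1 : β < 1) (hκ : 0 ≤ κ) (hz : 0 < z)
    (hk : k * (z + 1 + β) = β * z + 2) (hT : 0 ≤ T) (hkκ : k ≤ κ * z)
    (hy : z * (1 + κ * (1 - β) / (2 * (2 + β)) * T) ≤ y) :
    (β * y + 2) ^ 2 ≤ k ^ 2 * ((y + 1 + β) ^ 2 - (1 - β) ^ 2 * T) := by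
  have hb : 0 < 1 - β := by linarith
  have hk0 : 0 < k := by
    have : 0 < k * (z + 1 + β) := by rw [hk]; positivity
    exact pos_of_mul_pos_left this (by positivity)
  set D := y - z with hD
  have hD1 : z * κ * (1 - β) * T ≤ 2 * (2 + β) * D := by
    have e : z * (1 + κ * (1 - β) / (2 * (2 + β)) * T) =
      z + z * κ * (1 - β) * T / (2 * (2 + β)) := by ring
    rw [e, ← le_sub_iff_add_le', div_le_iff₀ (by positivity)] at hy
    linarith
  have hD0 : 0 ≤ D := by
    have : 0 ≤ 2 * (2 + β) * D := le_trans (by positivity) hD1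
    exact nonneg_of_mul_nonneg_right this (by positivity)
  clear_value D
  obtain rfl : y = z + D := by linarith
  have hkb : (k - β) * (z + 1 + β) = (1 - β) * (2 + β) := by linear_combination hk
  have hkβ : 0 < k - β := by
    have : 0 < (k - β) * (z + 1 + β) := by rw [hkb]; positivity
    exact pos_of_mul_pos_left this (by positivity)
  have e : k ^ 2 * ((z + D + 1 + β) ^ 2 - (1 - β) ^ 2 * T) - (β * (z + D) + 2) ^ 2 =
      (k - β) * D * ((k + β) * D) + 2 * k * ((1 - β) * (2 + β)) * D -
        k ^ 2 * (1 - β) ^ 2 * T := by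
    linear_combination (k * (z + 1 + β) + β * z + 2 + 2 * k * D - 2 * D * (k - β)) * hk + 2 * k * D * hkb
  have h1 : 0 ≤ (k - β) * D * ((k + β) * D) := by positivity
  have h2 : k * (1 - β) * (k * (1 - β) * T) ≤ k * (1 - β) * (2 * (2 + β) * D) := by
    refine mul_le_mul_of_nonneg_left (le_trans ?_ hD1) (by positivity)
    have : 0 ≤ (1 - β) * T := by positivity
    nlinarith
  linarith

theorem one_sub_rpow_mul_le {T a : ℝ} (hT1 : T < 1) (ha : 0 ≤ a) :
    (1 - T) ^ a * (1 + a * T) ≤ 1 := by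
  have h1 : 0 < 1 - T := by linarith
  rw [Real.rpow_def_of_pos h1]
  have h2 : Real.log (1 - T) ≤ -T := by linarith [Real.log_le_sub_one_of_pos h1]
  have h3 : Real.exp (Real.log (1 - T) * a) ≤ Real.exp (-(a * T)) := by
    apply Real.exp_le_exp.2; nlinarith
  have h4 : 1 + a * T ≤ Real.exp (a * T) := by linarith [Real.add_one_le_exp (a * T)]
  calc _ ≤ Real.exp (Real.log (1 - T) * a) * Real.exp (a * T) := by gcongr
    _ ≤ Real.exp (-(a * T)) * Real.exp (a * T) := by gcongr
    _ = 1 := by rw [← Real.exp_add]; simp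

theorem quadratic_of_inv {β k Y T : ℝ} (hY : 0 < Y)
    (h : (β * (1 / Y) + 2) ^ 2 ≤ k ^ 2 * ((1 / Y + 1 + β) ^ 2 - (1 - β) ^ 2 * T)) :
    (β + 2 * Y) ^ 2 ≤ k ^ 2 * ((1 + (1 + β) * Y) ^ 2 - (1 - β) ^ 2 * T * Y ^ 2) := by
  have h' := mul_le_mul_of_nonneg_right h (sq_nonneg Y)
  have hy : 1 / Y * Y = 1 := by field_simp
  set y := 1 / Y
  have e1 : (β * y + 2) ^ 2 * Y ^ 2 = (β + 2 * Y) ^ 2 := by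
    linear_combination (β * y * Y + β + 4 * Y) * β * hy
  have e2 : (y + 1 + β) ^ 2 * Y ^ 2 = (1 + (1 + β) * Y) ^ 2 := by
    linear_combination (y * Y + 1 + 2 * (1 + β) * Y) * hy
  rw [e1, mul_assoc, sub_mul, e2] at h'
  exact h'

theorem fine_bound {β κ ρ k Y T : ℝ} (hβ0 : 0 ≤ β) (hβ1 : β < 1) (hκ : 0 ≤ κ) (hρ : 0 < ρ)
    (hk : k * (1 + (1 + β) * ρ) = β + 2 * ρ) (hkκ : k * ρ ≤ κ) (hY : 0 < Y) (hT : 0 ≤ T)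
    (hT1 : T < 1) (h : Y ≤ ρ * (1 - T) ^ (κ * (1 - β) / (2 * (2 + β)))) :
    (β + 2 * Y) ^ 2 ≤ k ^ 2 * ((1 + (1 + β) * Y) ^ 2 - (1 - β) ^ 2 * T * Y ^ 2) := by
  have hb : 0 < 1 - β := by linarith
  have hρz : ρ * (1 / ρ) = 1 := by field_simp
  have hz : 0 < 1 / ρ := by positivity
  refine quadratic_of_inv hY (fine_quadratic hβ0 hβ1 hκ hz ?_ hT ?_ ?_)
  · field_simp; linear_combination hk
  · rw [mul_one_div, le_div_iff₀ hρ]; exact hkκ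
  · set a := κ * (1 - β) / (2 * (2 + β))
    have ha : 0 ≤ a := by positivity
    rw [le_div_iff₀ hY]
    calc 1 / ρ * (1 + a * T) * Y ≤ 1 / ρ * (1 + a * T) * (ρ * (1 - T) ^ a) := by gcongr
      _ = (1 - T) ^ a * (1 + a * T) := by field_simp
      _ ≤ 1 := one_sub_rpow_mul_le hT1 ha

theorem tangent_bound {G m y w : ℝ} (hG : 0 < G) (hw : 0 ≤ w) (h : 1 ≤ y * ((G / 2) ^ 2 * w)) :
    4 * m ≤ G * (m ^ 2 * y + w) := by
  have hw' : 0 < w := by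
    rcases hw.eq_or_lt with h0 | h0
    · rw [← h0] at h; norm_num at h
    · exact h0
  have h7 : 4 * m * (G * w) ≤ G * (m ^ 2 * y + w) * (G * w) := by
    nlinarith [sq_nonneg (2 * m - G * w), mul_le_mul_of_nonneg_left h (sq_nonneg m)]
  exact le_of_mul_le_mul_right h7 (by positivity)

set_option maxHeartbeats 1000000 in
theorem crude_bound {β s Y T : ℝ} (hβ0 : 0 ≤ β) (hβ1 : β < 1)
    (hs0 : 141 / 100 + 58 / 100 * β ≤ s) (hs1 : s ≤ 22 / 10 + 75 / 100 * β) (hY : 0 < Y)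
    (hT1 : T < 1)
    (h : Y ≤ ((201 / 200 * s ^ 2 + 1) / 2) ^ 2 *
      (1 - T) ^ ((3 + β) * (1 - β) / (2 * (2 + β)))) :
    (β + 2 * Y) ^ 2 ≤ ((2 * s + β) / (2 - β + 2 * β * s)) ^ 2 *
      ((1 + (1 + β) * Y) ^ 2 - (1 - β) ^ 2 * T * Y ^ 2) := by
  have hb : 0 < 1 - β := by linarith
  have hs : 1 < s := by linarith
  have hC := crude_const_coeff_nonneg hβ0 hβ1.le hs0 hs1
  have hB := crude_lin_coeff_nonneg hβ0 hβ1.le hs0 hs1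
  have hden : 0 < 2 - β + 2 * β * s := by nlinarith
  have ha1 : 0 ≤ 2 * s * (1 + β) - β := by nlinarith
  have hc1 : 0 ≤ 2 * s * (1 + β ^ 2) + 3 * β - β ^ 2 := by nlinarith
  refine quadratic_of_inv hY ?_
  have hy : 0 < 1 / Y := by positivity
  set a := (3 + β) * (1 - β) / (2 * (2 + β)) with ha
  have ha0 : 0 ≤ a := by positivity
  have ha1' : a ≤ 1 := by rw [ha, div_le_one (by positivity)]; nlinarith
  have hber : (1 - T) ^ a ≤ 1 - a * T := by
    have := rpow_one_add_le_one_add_mul_self (s := -T) (by linarith) ha0 ha1'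
    calc (1 - T) ^ a = (1 + -T) ^ a := by ring_nf
      _ ≤ 1 + a * -T := this
      _ = _ := by ring
  set E := 201 / 200 * s ^ 2
  have hE : 0 < E + 1 := by positivity
  set m := 137 / 100 + 62 / 100 * β
  set y := 1 / Y with hy_def
  have hyY : y * Y = 1 := by rw [hy_def]; field_simp
  have hw : 0 ≤ 1 - a * T := le_trans (Real.rpow_nonneg (by linarith) _) hber
  have hlin : (E + 1) * (a * T) ≤ (E + 1) * (m ^ 2 * y + 1) - 4 * m := by
    have h1 : Y ≤ ((E + 1) / 2) ^ 2 * (1 - a * T) := h.trans (by gcongr)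
    have h2 : 1 ≤ y * (((E + 1) / 2) ^ 2 * (1 - a * T)) :=
      hyY.symm.le.trans (mul_le_mul_of_nonneg_left h1 hy.le)
    have h3 := tangent_bound (m := m) hE hw h2
    linarith
  have haT : 2 * (2 + β) * (a * T) = (3 + β) * ((1 - β) * T) := by
    rw [ha]; field_simp
  rw [div_pow, div_mul_eq_mul_div, le_div_iff₀ (by positivity)]
  set a₁ := 2 * s * (1 + β) - β with ha₁
  set b₁ := 4 + β - 2 * s with hb₁
  set c₁ := 2 * s * (1 + β ^ 2) + 3 * β - β ^ 2 with hc₁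
  set d₁ := 4 - β + β ^ 2 + 2 * s * (1 + 3 * β) with hd₁
  have hfac : (2 * s + β) ^ 2 * ((y + 1 + β) ^ 2 - (1 - β) ^ 2 * T) -
      (β * y + 2) ^ 2 * (2 - β + 2 * β * s) ^ 2 =
      (1 - β) * ((a₁ * y - b₁) * (c₁ * y + d₁) - (2 * s + β) ^ 2 * ((1 - β) * T)) := by
    rw [ha₁, hb₁, hc₁, hd₁]; ring
  suffices hmain : 0 ≤ (a₁ * y - b₁) * (c₁ * y + d₁) - (2 * s + β) ^ 2 * ((1 - β) * T) by
    nlinarith [mul_nonneg hb.le hmain]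
  have hR : 0 ≤ (2 * s + β) ^ 2 := sq_nonneg _
  set q := (2 * s + β) ^ 2
  set y₀ := 29 / 100 - 13 / 100 * β
  have h3 : (E + 1) * (q * ((3 + β) * ((1 - β) * T))) ≤
      2 * (2 + β) * q * ((E + 1) * (m ^ 2 * y + 1) - 4 * m) := by
    rw [← haT]
    have := mul_le_mul_of_nonneg_left hlin (by positivity : 0 ≤ 2 * (2 + β) * q)
    linarith
  have h4 : 0 ≤ (E + 1) * (y * ((3 + β) * (a₁ * d₁ - b₁ * c₁) + 2 * (3 + β) * a₁ * c₁ * y₀ -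
      2 * (2 + β) * q * m ^ 2)) := by positivity
  have h5 : 0 ≤ (E + 1) * ((3 + β) * (a₁ * c₁ * (y - y₀) ^ 2)) := by positivity
  have h6 : 0 ≤ ((E + 1) * (3 + β)) *
      ((a₁ * y - b₁) * (c₁ * y + d₁) - q * ((1 - β) * T)) := by
    linarith
  exact nonneg_of_mul_nonneg_right h6 (by positivity)

/-- The logarithmic one-dimensional map `a ↦ D log ((eᵃ + 1 + β) / (β eᵃ + 2))`, with the critical
exponent `D = (2 + β) / (1 - β)`. -/
noncomputable def logMap (β a : ℝ) : ℝ :=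
  (2 + β) / (1 - β) * (Real.log (Real.exp a + 1 + β) - Real.log (β * Real.exp a + 2))

theorem logMap_zero (β : ℝ) : logMap β 0 = 0 := by
  unfold logMap
  rw [Real.exp_zero, show (1 : ℝ) + 1 + β = β * 1 + 2 by ring, sub_self, mul_zero]

theorem hasDerivAt_logMap {β : ℝ} (hβ0 : 0 ≤ β) (hβ1 : β < 1) (a : ℝ) :
    HasDerivAt (logMap β)
      ((2 + β) ^ 2 / (β * Real.exp a + (2 + β + β ^ 2) + 2 * (1 + β) * Real.exp (-a))) a := by
  have hb : 0 < 1 - β := by linarith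
  have hx := Real.exp_pos a
  have h1 : HasDerivAt (fun a => Real.exp a + 1 + β) (Real.exp a) a :=
    ((Real.hasDerivAt_exp a).add_const 1).add_const β
  have h2 : HasDerivAt (fun a => β * Real.exp a + 2) (β * Real.exp a) a :=
    ((Real.hasDerivAt_exp a).const_mul β).add_const 2
  refine (((h1.log (by positivity)).sub (h2.log (by positivity))).const_mul
    ((2 + β) / (1 - β))).congr_deriv ?_
  rw [Real.exp_neg]
  field_simp
  ring

theorem continuous_logMap {β : ℝ} (hβ0 : 0 ≤ β) (hβ1 : β < 1) : Continuous (logMap β) :=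
  continuous_iff_continuousAt.2 fun a => (hasDerivAt_logMap hβ0 hβ1 a).continuousAt

theorem strictMono_logMap {β : ℝ} (hβ0 : 0 ≤ β) (hβ1 : β < 1) : StrictMono (logMap β) := by
  refine strictMono_of_deriv_pos fun a => ?_
  rw [(hasDerivAt_logMap hβ0 hβ1 a).deriv]
  positivity

theorem logMap_nonneg {β a : ℝ} (hβ0 : 0 ≤ β) (hβ1 : β < 1) (ha : 0 ≤ a) : 0 ≤ logMap β a := by
  rw [← logMap_zero β]
  exact (strictMono_logMap hβ0 hβ1).monotone ha

theorem logMap_le_two_mul_log {β E : ℝ} (hβ0 : 0 ≤ β) (hβ1 : β < 1) (hE : 1 ≤ E) :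
    logMap β (Real.log E) ≤ 2 * Real.log ((E + 1) / 2) := by
  have hanti : MonotoneOn (fun a => 2 * Real.log ((Real.exp a + 1) / 2) - logMap β a)
      (Set.Ici 0) := by
    have hd : ∀ a : ℝ, HasDerivAt (fun a => 2 * Real.log ((Real.exp a + 1) / 2) - logMap β a)
        (2 * (Real.exp a / 2 / ((Real.exp a + 1) / 2)) -
          (2 + β) ^ 2 / (β * Real.exp a + (2 + β + β ^ 2) + 2 * (1 + β) * Real.exp (-a))) a := by
      intro a
      have h1 : HasDerivAt (fun a => (Real.exp a + 1) / 2) (Real.exp a / 2) a :=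
        ((Real.hasDerivAt_exp a).add_const 1).div_const 2
      exact ((h1.log (by positivity)).const_mul 2).sub (hasDerivAt_logMap hβ0 hβ1 a)
    refine monotoneOn_of_deriv_nonneg (convex_Ici 0)
      (fun a _ => (hd a).continuousAt.continuousWithinAt)
      (fun a _ => (hd a).differentiableAt.differentiableWithinAt) (fun a ha => ?_)
    rw [interior_Ici] at ha
    rw [(hd a).deriv, sub_nonneg, Real.exp_neg]
    have hx : 1 ≤ Real.exp a := Real.one_le_exp (le_of_lt ha)
    set x := Real.exp a
    have hx0 : 0 < x := by linarith
    rw [show β * x + (2 + β + β ^ 2) + 2 * (1 + β) * x⁻¹ = (x + 1 + β) * (β * x + 2) / x by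
      field_simp; ring, div_div_eq_mul_div, div_le_iff₀ (by positivity),
      show 2 * (x / 2 / ((x + 1) / 2)) * ((x + 1 + β) * (β * x + 2)) =
        (2 * x * ((x + 1 + β) * (β * x + 2))) / (x + 1) by field_simp,
      le_div_iff₀ (by positivity)]
    have : 0 ≤ x * (β * ((x - 1) * (2 * x + β))) := by
      have := sub_nonneg.2 hx
      positivity
    nlinarith
  have h := hanti (Set.self_mem_Ici) (Set.mem_Ici.2 (Real.log_nonneg hE)) (Real.log_nonneg hE)
  simp only [Real.exp_zero, logMap_zero, Real.exp_log (by linarith : 0 < E)] at h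
  norm_num at h
  linarith

theorem le_logMap {β a : ℝ} (hβ0 : 0 < β) (hβ1 : β < 1) (ha : 0 ≤ a)
    (haβ : β * Real.exp a ≤ 2 * (1 + β)) : a ≤ logMap β a := by
  have hm : MonotoneOn (fun t => logMap β t - t) (Set.Icc 0 a) := by
    have hd : ∀ t, HasDerivAt (fun t => logMap β t - t) _ t := fun t =>
      (hasDerivAt_logMap hβ0.le hβ1 t).sub (hasDerivAt_id t)
    refine monotoneOn_of_deriv_nonneg (convex_Icc 0 a)
      (fun t _ => (hd t).continuousAt.continuousWithinAt)
      (fun t _ => (hd t).differentiableAt.differentiableWithinAt) (fun t ht => ?_)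
    rw [interior_Icc] at ht
    rw [(hd t).deriv, sub_nonneg, le_div_iff₀ (by positivity), one_mul, Real.exp_neg]
    have hx1 : 1 ≤ Real.exp t := Real.one_le_exp ht.1.le
    have hx2 : β * Real.exp t ≤ 2 * (1 + β) :=
      le_trans (mul_le_mul_of_nonneg_left (Real.exp_le_exp.2 ht.2.le) hβ0.le) haβ
    set x := Real.exp t
    have hx0 : 0 < x := by linarith
    rw [show β * x + (2 + β + β ^ 2) + 2 * (1 + β) * x⁻¹ = (x + 1 + β) * (β * x + 2) / x by
      field_simp; ring, div_le_iff₀ hx0]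
    nlinarith [mul_nonneg (sub_nonneg.2 hx1) (sub_nonneg.2 hx2)]
  have := hm (Set.left_mem_Icc.2 ha) (Set.right_mem_Icc.2 ha) ha
  simp only [logMap_zero] at this
  linarith

theorem neg_logMap_neg_logMap_lt {β a : ℝ} (hβ0 : 0 < β) (hβ1 : β < 1) (ha : 0 < a) :
    -logMap β (-logMap β a) < a := by
  have hm : StrictMonoOn (fun t => t + logMap β (-logMap β t)) (Set.Ici 0) := by
    have hd : ∀ t, HasDerivAt (fun t => t + logMap β (-logMap β t)) _ t := fun t =>
      (hasDerivAt_id t).add (HasDerivAt.comp (h₂ := logMap β) (h := fun t => -logMap β t) t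
        (hasDerivAt_logMap hβ0.le hβ1 (-logMap β t)) (hasDerivAt_logMap hβ0.le hβ1 t).neg)
    refine strictMonoOn_of_deriv_pos (convex_Ici 0)
      (fun t _ => (hd t).continuousAt.continuousWithinAt) (fun t ht => ?_)
    rw [interior_Ici] at ht
    rw [(hd t).deriv, mul_neg, ← sub_eq_add_neg, sub_pos, div_mul_div_comm,
      div_lt_one (by positivity), neg_neg]
    have hx1 : 1 < Real.exp t := Real.one_lt_exp_iff.2 ht
    have hy1 : 1 < Real.exp (logMap β t) := by
      rw [Real.one_lt_exp_iff, ← logMap_zero β]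
      exact strictMono_logMap hβ0.le hβ1 ht
    have hyx : β * Real.exp t ≤ 2 * (1 + β) → Real.exp t ≤ Real.exp (logMap β t) := fun h =>
      Real.exp_le_exp.2 (le_logMap hβ0 hβ1 (le_of_lt ht) h)
    rw [Real.exp_neg, Real.exp_neg]
    set x := Real.exp t
    set y := Real.exp (logMap β t)
    have hx0 : 0 < x := by linarith
    have hy0 : 0 < y := by linarith
    rw [show β * x + (2 + β + β ^ 2) + 2 * (1 + β) * x⁻¹ = (x + 1 + β) * (β * x + 2) / x by
      field_simp; ring, show β * y⁻¹ + (2 + β + β ^ 2) + 2 * (1 + β) * y =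
        (1 + (1 + β) * y) * (β + 2 * y) / y by field_simp; ring]
    have hstep : ∀ z, 1 ≤ z → z ≤ y →
        (1 + (1 + β) * z) * (β + 2 * z) / z ≤ (1 + (1 + β) * y) * (β + 2 * y) / y := by
      intro z hz hzy
      have hz0 : 0 < z := by linarith
      rw [div_le_div_iff₀ hz0 hy0]
      have hzy1 : 1 ≤ z * y := one_le_mul_of_one_le_of_one_le hz hy1.le
      have h1 : β ≤ 2 * (1 + β) * (z * y) := by nlinarith
      nlinarith [mul_nonneg (sub_nonneg.2 hzy) (sub_nonneg.2 h1)]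
    rcases le_total (β * x) (2 * (1 + β)) with h | h
    · refine lt_of_lt_of_le ?_ (mul_le_mul_of_nonneg_right (hstep x hx1.le (hyx h)) (by positivity))
      rw [div_mul_div_comm, lt_div_iff₀ (by positivity)]
      have hp : 0 < (x - 1) ^ 2 := by have := sub_pos.2 hx1; positivity
      have e : (1 + (1 + β) * x) * (β + 2 * x) * ((x + 1 + β) * (β * x + 2)) -
          (2 + β) ^ 2 * (2 + β) ^ 2 * (x * x) = (x - 1) ^ 2 *
            (2 * β * (1 + β) * (x + 1) ^ 2 + (2 + β + β ^ 2) * (2 + 3 * β) * x) := by ring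
      have : 0 < (x - 1) ^ 2 *
            (2 * β * (1 + β) * (x + 1) ^ 2 + (2 + β + β ^ 2) * (2 + 3 * β) * x) := by positivity
      linarith
    · have h1 : (2 + β) ^ 2 < (1 + (1 + β) * y) * (β + 2 * y) / y := by
        rw [lt_div_iff₀ hy0]
        have : 0 < 2 * (1 + β) * y - β := by nlinarith
        nlinarith [mul_pos (sub_pos.2 hy1) this]
      have h2 : (2 + β) ^ 2 ≤ (x + 1 + β) * (β * x + 2) / x := by
        rw [le_div_iff₀ hx0]
        nlinarith [mul_nonneg (sub_nonneg.2 hx1.le) (sub_nonneg.2 h)]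
      have h3 : 0 < (2 + β) ^ 2 := by positivity
      exact mul_lt_mul h1 h2 h3 (h3.le.trans h1.le)
  have := hm Set.self_mem_Ici (Set.mem_Ici.2 ha.le) ha
  simp only [logMap_zero, neg_zero, add_zero] at this
  linarith

/-- The message sent through an edge of the Potts model from a vertex with marginal weights `p`. -/
def edgeMsg (β : ℝ) (p : Fin 3 → ℝ) (c : Fin 3) : ℝ := ∑ c', p c' - (1 - β) * p c

/-- Marginal weights at a vertex whose children have marginal weights `P`. -/
def treeStep {d : ℕ} (β : ℝ) (P : Fin d → Fin 3 → ℝ) (c : Fin 3) : ℝ := ∏ j, edgeMsg β (P j) c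

/-- The square of each entry is within a factor `E ^ 2` of the product of the other two. -/
def IsBalanced (E : ℝ) (p : Fin 3 → ℝ) : Prop :=
  (∀ c, 0 < p c) ∧ ∀ i j k : Fin 3, i ≠ j → j ≠ k → i ≠ k → p i ^ 2 ≤ E ^ 2 * (p j * p k)

theorem edgeMsg_eq (β : ℝ) (p : Fin 3 → ℝ) {i j k : Fin 3} (hij : i ≠ j) (hjk : j ≠ k)
    (hik : i ≠ k) : edgeMsg β p i = β * p i + p j + p k := by
  have : ∑ c, p c = p i + p j + p k := by
    rw [Fin.sum_univ_three]
    fin_cases i <;> fin_cases j <;> fin_cases k <;> simp_all <;> ring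
  rw [edgeMsg, this]
  ring

theorem edgeMsg_pos {β : ℝ} (hβ0 : 0 < β) {p : Fin 3 → ℝ} (hp : ∀ c, 0 ≤ p c)
    (hp' : ∃ c, 0 < p c) (c : Fin 3) : 0 < edgeMsg β p c := by
  have hs : 0 < ∑ c', p c' := by
    obtain ⟨c₀, h₀⟩ := hp'
    exact Finset.sum_pos' (fun i _ => hp i) ⟨c₀, Finset.mem_univ _, h₀⟩
  have hc : p c ≤ ∑ c', p c' := Finset.single_le_sum (fun i _ => hp i) (Finset.mem_univ c)
  unfold edgeMsg
  have := hp c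
  rcases this.eq_or_lt with h | h
  · rw [← h]; linarith
  · nlinarith [mul_pos hβ0 h]

theorem treeStep_pos {d : ℕ} {β : ℝ} (hβ0 : 0 < β) {P : Fin d → Fin 3 → ℝ}
    (hP : ∀ j c, 0 < P j c) (c : Fin 3) : 0 < treeStep β P c :=
  Finset.prod_pos fun j _ => edgeMsg_pos hβ0 (fun c => (hP j c).le) ⟨0, hP j 0⟩ c

theorem IsBalanced.mono {E E' : ℝ} {p : Fin 3 → ℝ} (h : IsBalanced E p) (hE : 0 ≤ E) (hE' : E ≤ E') :
    IsBalanced E' p := by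
  refine ⟨h.1, fun i j k hij hjk hik => (h.2 i j k hij hjk hik).trans ?_⟩
  have := h.1 j
  have := h.1 k
  gcongr

/-- Ratios of entries of a balanced vector are at most `E ^ 2`. -/
theorem IsBalanced.le_mul {E : ℝ} {p : Fin 3 → ℝ} (h : IsBalanced E p) (hE : 1 ≤ E) (i j : Fin 3) :
    p i ≤ E ^ 2 * p j := by
  have hE2 : 1 ≤ E ^ 2 := one_le_pow₀ hE
  rcases eq_or_ne i j with rfl | hij
  · exact le_mul_of_one_le_left (h.1 i).le hE2
  obtain ⟨k, hjk, hik⟩ : ∃ k, j ≠ k ∧ i ≠ k := by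
    revert i j; decide
  have h₁ := h.2 i j k hij hjk hik
  have h₂ := h.2 k i j hik.symm hij hjk.symm
  have hi := h.1 i
  have hj := h.1 j
  have hk := h.1 k
  by_contra hlt
  rw [not_le] at hlt
  have h₃ : E ^ 2 * (p j * p k) < p i * p k := by
    rw [← mul_assoc]; exact mul_lt_mul_of_pos_right hlt hk
  have h₄ : p i < p k := by nlinarith
  have h₅ : p i * (E ^ 2 * p j) < p i * p i := mul_lt_mul_of_pos_left hlt hi
  nlinarith

/-- A bound on each edge message gives a bound on their product. -/
theorem isBalanced_treeStep {d : ℕ} {β K E : ℝ} (hβ0 : 0 < β) {P : Fin d → Fin 3 → ℝ}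
    (hnn : ∀ j c, 0 ≤ P j c) (hpos : ∀ j, ∃ c, 0 < P j c) (hK : K ^ d ≤ E ^ 2)
    (h : ∀ a, ∀ i j k : Fin 3, i ≠ j → j ≠ k → i ≠ k →
      edgeMsg β (P a) i ^ 2 ≤ K * (edgeMsg β (P a) j * edgeMsg β (P a) k)) :
    IsBalanced E (treeStep β P) := by
  have hw : ∀ a c, 0 < edgeMsg β (P a) c := fun a => edgeMsg_pos hβ0 (hnn a) (hpos a)
  have hs : ∀ c, 0 < treeStep β P c := fun c => Finset.prod_pos fun a _ => hw a c
  refine ⟨hs, fun i j k hij hjk hik => ?_⟩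
  calc treeStep β P i ^ 2 = ∏ a, edgeMsg β (P a) i ^ 2 := by
        rw [treeStep, Finset.prod_pow]
    _ ≤ ∏ a, K * (edgeMsg β (P a) j * edgeMsg β (P a) k) :=
        Finset.prod_le_prod (fun a _ => sq_nonneg _) fun a _ => h a i j k hij hjk hik
    _ = K ^ d * (treeStep β P j * treeStep β P k) := by
        simp [treeStep, Finset.prod_mul_distrib]
    _ ≤ E ^ 2 * (treeStep β P j * treeStep β P k) :=
        mul_le_mul_of_nonneg_right hK (mul_pos (hs j) (hs k)).le

/-- Two levels of the tree recursion, reduced to the one-variable inequality of `parent_bound`. -/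
theorem isBalanced_two_step {d : ℕ} {β κ E E' ρ k : ℝ} (hβ0 : 0 < β) (hβ1 : β < 1)
    (hd : (d : ℝ) * (1 - β) ≤ 2 + β) (hκ : 0 ≤ κ) (hCB : ChildBound β κ E) (hρ0 : 0 < ρ)
    (hρ : (d : ℝ) * Real.log ((E + 1 + β) / (β * E + 2)) ≤ Real.log ρ)
    (hf : ∀ Y T : ℝ, 0 < Y → 0 ≤ T → T < 1 → Y ≤ ρ * (1 - T) ^ (κ * (1 - β) / (2 * (2 + β))) →
      (β + 2 * Y) ^ 2 ≤ k ^ 2 * ((1 + (1 + β) * Y) ^ 2 - (1 - β) ^ 2 * T * Y ^ 2))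
    (hk0 : 0 ≤ k) (hk : k ^ d ≤ E') {q : Fin d → Fin d → Fin 3 → ℝ}
    (hq : ∀ a b, IsBalanced E (q a b)) :
    IsBalanced E' (treeStep β fun a => treeStep β (q a)) := by
  have hpos : ∀ a c, 0 < treeStep β (q a) c := fun a =>
    treeStep_pos hβ0 fun b => (hq a b).1
  refine isBalanced_treeStep (K := k ^ 2) hβ0 (fun a c => (hpos a c).le) (fun a => ⟨0, hpos a 0⟩)
    ?_ fun a i j l hij hjl hil => ?_
  · rw [← pow_mul, mul_comm, pow_mul]
    exact pow_le_pow_left₀ (pow_nonneg hk0 d) hk 2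
  · rw [edgeMsg_eq β _ hij hjl hil, edgeMsg_eq β _ hij.symm hil hjl,
      edgeMsg_eq β _ hil.symm hij hjl.symm]
    have h := log_prod_sub_bound (ι := Fin d) hβ0.le hβ1 hκ (by simpa using hd) hCB
      (p₁ := fun b => q a b i) (p₂ := fun b => q a b j) (p₃ := fun b => q a b l)
      (fun b => (hq a b).1 i) (fun b => (hq a b).1 j) (fun b => (hq a b).1 l)
      (fun b => (hq a b).2 i j l hij hjl hil) (fun b => (hq a b).2 j i l hij.symm hil hjl)
      (fun b => (hq a b).2 l i j hil.symm hij hjl.symm)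
    have e₁ : ∏ b, (β * q a b i + q a b j + q a b l) = treeStep β (q a) i :=
      Finset.prod_congr rfl fun b _ => (edgeMsg_eq β _ hij hjl hil).symm
    have e₂ : ∏ b, (q a b i + β * q a b j + q a b l) = treeStep β (q a) j :=
      Finset.prod_congr rfl fun b _ => by rw [edgeMsg_eq β _ hij.symm hil hjl]; ring
    have e₃ : ∏ b, (q a b i + q a b j + β * q a b l) = treeStep β (q a) l :=
      Finset.prod_congr rfl fun b _ => by rw [edgeMsg_eq β _ hil.symm hij hjl.symm]; ring
    rw [e₁, e₂, e₃, Fintype.card_fin] at h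
    have := parent_bound hβ0.le hβ1 hκ (hpos a i) (hpos a j) (hpos a l) hρ0 hρ h hf
    refine this.trans (le_of_eq ?_)
    ring

theorem natCast_mul_log_le_logMap {d : ℕ} {β E : ℝ} (hβ0 : 0 < β) (hβ1 : β < 1)
    (hd : (d : ℝ) * (1 - β) ≤ 2 + β) (hE : 1 ≤ E) :
    (d : ℝ) * Real.log ((E + 1 + β) / (β * E + 2)) ≤ logMap β (Real.log E) := by
  have hb : 0 < 1 - β := by linarith
  have hE0 : 0 < E := by linarith
  rw [logMap, Real.exp_log hE0, ← Real.log_div (by positivity) (by positivity)]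
  refine mul_le_mul_of_nonneg_right ((le_div_iff₀ hb).2 hd) (Real.log_nonneg ?_)
  rw [le_div_iff₀ (by positivity)]
  nlinarith

/-- The contraction factor as seen through `logMap`. -/
theorem pow_le_exp_neg_logMap {d : ℕ} {β k z : ℝ} (hβ0 : 0 < β) (hβ1 : β < 1)
    (hd : (d : ℝ) * (1 - β) ≤ 2 + β) (hz : z ≤ 0)
    (hk : k * (Real.exp z + 1 + β) = β * Real.exp z + 2) :
    k ^ d ≤ Real.exp (-logMap β z) := by
  have hb : 0 < 1 - β := by linarith
  have hx := Real.exp_pos z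
  have hx1 : Real.exp z ≤ 1 := Real.exp_le_one_iff.2 hz
  have hk' : k = (β * Real.exp z + 2) / (Real.exp z + 1 + β) := by
    rw [eq_div_iff (by positivity)]; exact hk
  have hk1 : 1 ≤ k := by
    rw [hk', le_div_iff₀ (by positivity)]; nlinarith
  rw [← Real.log_le_iff_le_exp (by positivity), Real.log_pow]
  have e : -logMap β z = (2 + β) / (1 - β) * Real.log k := by
    rw [logMap, hk', Real.log_div (by positivity) (by positivity)]; ring
  rw [e]
  exact mul_le_mul_of_nonneg_right ((le_div_iff₀ hb).2 hd) (Real.log_nonneg hk1)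

/-- Contraction along the one-dimensional map, provided `κ` dominates the slope. -/
theorem isBalanced_two_step_logMap {d : ℕ} {β κ E : ℝ} (hβ0 : 0 < β) (hβ1 : β < 1)
    (hd : (d : ℝ) * (1 - β) ≤ 2 + β) (hE : 1 ≤ E) (hκ : 0 ≤ κ) (hCB : ChildBound β κ E)
    (hκρ : ∀ ρ, 1 ≤ ρ → ρ ≤ ((E + 1) / 2) ^ 2 → β * ρ + 2 * ρ ^ 2 ≤ κ * (1 + (1 + β) * ρ))
    {q : Fin d → Fin d → Fin 3 → ℝ} (hq : ∀ a b, IsBalanced E (q a b)) :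
    IsBalanced (Real.exp (-logMap β (-logMap β (Real.log E))))
      (treeStep β fun a => treeStep β (q a)) := by
  have hρ1 : 1 ≤ Real.exp (logMap β (Real.log E)) :=
    Real.one_le_exp (logMap_nonneg hβ0.le hβ1 (Real.log_nonneg hE))
  have hρ2 : Real.exp (logMap β (Real.log E)) ≤ ((E + 1) / 2) ^ 2 := by
    rw [← Real.le_log_iff_exp_le (by positivity), Real.log_pow]
    exact_mod_cast logMap_le_two_mul_log hβ0.le hβ1 hE
  have hκ' := hκρ _ hρ1 hρ2
  set ρ := Real.exp (logMap β (Real.log E)) with hρ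
  have hρ0 : 0 < ρ := by linarith
  have hden : 0 < 1 + (1 + β) * ρ := by positivity
  have hk : (β + 2 * ρ) / (1 + (1 + β) * ρ) * (1 + (1 + β) * ρ) = β + 2 * ρ :=
    div_mul_cancel₀ _ hden.ne'
  refine isBalanced_two_step (k := (β + 2 * ρ) / (1 + (1 + β) * ρ)) hβ0 hβ1 hd hκ hCB hρ0 ?_
    (fun Y T hY hT hT1 h => fine_bound hβ0.le hβ1 hκ hρ0 hk ?_ hY hT hT1 h) (by positivity)
    (pow_le_exp_neg_logMap hβ0 hβ1 hd ?_ ?_) hq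
  · rw [hρ, Real.log_exp]; exact natCast_mul_log_le_logMap hβ0 hβ1 hd hE
  · rw [div_mul_eq_mul_div, div_le_iff₀ hden]; linarith
  · have := logMap_nonneg hβ0.le hβ1 (Real.log_nonneg hE); linarith
  · rw [Real.exp_neg, ← hρ]
    field_simp
    ring

theorem isBalanced_two_step_small {d : ℕ} {β E : ℝ} (hβ0 : 0 < β) (hβ1 : β < 1)
    (hd : (d : ℝ) * (1 - β) ≤ 2 + β) (hE : 1 ≤ E) (hE2 : E ≤ 2 + 2 * β)
    {q : Fin d → Fin d → Fin 3 → ℝ} (hq : ∀ a b, IsBalanced E (q a b)) :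
    IsBalanced (Real.exp (-logMap β (-logMap β (Real.log E))))
      (treeStep β fun a => treeStep β (q a)) := by
  rcases le_total E 2 with h | h
  · refine isBalanced_two_step_logMap hβ0 hβ1 hd hE (by linarith)
      (childBound_small hβ0.le hβ1 hE h) (fun ρ hρ1 hρ2 => ?_) hq
    obtain ⟨e, rfl⟩ : ∃ e, E = 1 + e := ⟨E - 1, by ring⟩
    have he0 : 0 ≤ e := by linarith
    have he1 : e ≤ 1 := by linarith
    have h0 : 2 * ρ ^ 2 ≤ (1 + 17 / 8 * e) * (1 + ρ) := by
      have h2 : ρ * (2 * ρ - (1 + 17 / 8 * e)) ≤ 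
          ((1 + e + 1) / 2) ^ 2 * (2 * ((1 + e + 1) / 2) ^ 2 - (1 + 17 / 8 * e)) := by
        have h3 : 0 ≤ 2 * (ρ + ((1 + e + 1) / 2) ^ 2) - (1 + 17 / 8 * e) := by nlinarith
        nlinarith [mul_nonneg (sub_nonneg.2 hρ2) h3]
      have h4 : 0 ≤ e * (125 / 100 - 625 / 1000 * e - 46875 / 100000 * e ^ 2 - 125 / 1000 * e ^ 3) := by
        have : e ^ 2 ≤ e := by nlinarith
        have : e ^ 3 ≤ e := by nlinarith [sq_nonneg e]
        refine mul_nonneg he0 (by linarith)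
      nlinarith
    have h1 : β * ρ ≤ (1 + 17 / 8 * e) * (β * ρ) := by
      have : 0 ≤ β * ρ := by positivity
      nlinarith [mul_nonneg he0 this]
    have e1 : 1 + e - 1 = e := by ring
    rw [e1]
    linarith
  · refine isBalanced_two_step_logMap hβ0 hβ1 hd hE (by linarith)
      (childBound_middle hβ0.le hβ1 h hE2) (fun ρ hρ1 hρ2 => ?_) hq
    have hR : ρ ≤ (3 / 2 + β) ^ 2 := hρ2.trans (by gcongr; linarith)
    have h1 : 2 * ρ ^ 2 ≤ 2 * (3 / 2 + β) ^ 2 * ρ := by nlinarith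
    have h2 : 0 ≤ (25 / 8 + 4 * β) * (1 + β) - β - 2 * (3 / 2 + β) ^ 2 + 11 / 8 := by nlinarith
    by_cases h3 : 0 ≤ (25 / 8 + 4 * β) * (1 + β) - β - 2 * (3 / 2 + β) ^ 2
    · nlinarith [mul_nonneg h3 (by linarith : 0 ≤ ρ)]
    · rw [not_le] at h3
      nlinarith [mul_nonneg (sub_nonneg.2 hR) (neg_pos.2 h3).le, pow_pos hβ0 2, pow_pos hβ0 3,
        pow_pos hβ0 4]

theorem isBalanced_two_step_crude {d : ℕ} {β E : ℝ} (hβ0 : 0 < β) (hβ1 : β < 1)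
    (hd : (d : ℝ) * (1 - β) ≤ 2 + β) (hE : 2 + 2 * β ≤ E)
    (hE2 : E ≤ 7 / 2 ∨ 1 / 4 ≤ β ∧ E ≤ 9 / 2)
    {q : Fin d → Fin d → Fin 3 → ℝ} (hq : ∀ a b, IsBalanced E (q a b)) :
    IsBalanced (200 / 201 * E) (treeStep β fun a => treeStep β (q a)) := by
  have hE9 : E ≤ 9 / 2 := by rcases hE2 with h | h <;> linarith
  obtain ⟨s, hs0, hs⟩ : ∃ s : ℝ, 0 ≤ s ∧ s ^ 2 = 200 / 201 * E :=
    ⟨_, Real.sqrt_nonneg _, Real.sq_sqrt (by linarith)⟩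
  have hs1 : 141 / 100 + 58 / 100 * β ≤ s := by
    refine le_of_sq_le_sq ?_ hs0
    rw [hs]; nlinarith
  have hs2 : s ≤ 22 / 10 + 75 / 100 * β := by
    refine le_of_sq_le_sq ?_ (by positivity)
    rw [hs]; nlinarith
  have hspos : 0 < s := by linarith
  have hden : 0 < 2 - β + 2 * β * s := by nlinarith
  have hsE : E = 201 / 200 * s ^ 2 := by rw [hs]; ring
  have hm : 1 ≤ 2 * s - 1 := by linarith
  rw [← hs]
  refine isBalanced_two_step (κ := 3 + β) (ρ := ((201 / 200 * s ^ 2 + 1) / 2) ^ 2)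
    (k := (2 * s + β) / (2 - β + 2 * β * s)) hβ0 hβ1 hd (by linarith)
    (childBound_large hβ0.le hβ1 (by linarith) hE2) (by positivity) ?_
    (fun Y T hY _ hT1 h => crude_bound hβ0.le hβ1 hs1 hs2 hY hT1 h) (by positivity) ?_ hq
  · rw [← hsE, Real.log_pow]
    refine (natCast_mul_log_le_logMap hβ0 hβ1 hd (by linarith)).trans ?_
    exact_mod_cast logMap_le_two_mul_log hβ0.le hβ1 (by linarith)
  · have h := (natCast_mul_log_le_logMap hβ0 hβ1 hd hm).trans
      (logMap_le_two_mul_log hβ0.le hβ1 hm)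
    rw [show 2 * s - 1 + 1 + β = 2 * s + β by ring,
      show β * (2 * s - 1) + 2 = 2 - β + 2 * β * s by ring,
      show (2 * s - 1 + 1) / 2 = s by ring, ← Real.log_pow] at h
    have h2 : 2 * Real.log s = Real.log (s ^ 2) := by rw [Real.log_pow]; norm_num
    rw [h2, Real.log_le_log_iff (by positivity) (by positivity)] at h
    exact h

theorem one_add_sq_le_of_inv_le {E u y : ℝ} (hE : 7 / 2 ≤ E) (hu : 0 < u) (hu1 : u ≤ 1)
    (hy : 0 < y) (h : 1 ≤ E ^ 2 * (y * u)) :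
    (1 + u) ^ 2 ≤ E * ((y + u) * (y + 1)) := by
  have hE0 : 0 < E := by linarith
  have hx0 : 0 < u * E := by positivity
  have key : 0 ≤ (u * E) ^ 2 - u * E * (1 + u) ^ 2 + (1 + u) := by
    by_cases h3 : (1 + u) ^ 3 ≤ 4
    · nlinarith [sq_nonneg (u * E - (1 + u) ^ 2 / 2), mul_nonneg (by linarith : 0 ≤ 1 + u)
        (sub_nonneg.2 h3)]
    · have hu2 : 1 / 2 ≤ u := by
        by_contra hc
        rw [not_le] at hc
        exact h3 (by nlinarith [sq_nonneg u, mul_pos hu hu])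
      have hxE : 0 ≤ u * E - 7 / 2 * u := by nlinarith
      have hs : 0 ≤ u * E + 7 / 2 * u - (1 + u) ^ 2 := by nlinarith
      have h0 : 0 ≤ 1 - 5 / 2 * u + 21 / 4 * u ^ 2 - 7 / 2 * u ^ 3 := by
        have : 0 ≤ (1 - u) * (5 / 2 - 21 / 4 * (1 - u) + 7 / 2 * (1 - u) ^ 2) :=
          mul_nonneg (by linarith) (by nlinarith [sq_nonneg (1 - u - 3 / 4)])
        nlinarith
      nlinarith [mul_nonneg hxE hs]
  have h1 : (1 + u) ≤ u * E * (E * (y * (1 + u))) := by nlinarith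
  have h2 : u * E * (1 + u) ^ 2 ≤ u * E * (E * ((y + u) * (y + 1))) := by
    have : 0 ≤ u * E * (E * y ^ 2) := by positivity
    nlinarith
  exact le_of_mul_le_mul_left h2 hx0

theorem add_sq_le_of_sq_le {E x y z : ℝ} (hE : 7 / 2 ≤ E) (hx : 0 < x) (hy : 0 < y) (hz : 0 < z)
    (h₁ : y ^ 2 ≤ E ^ 2 * (x * z)) (h₂ : z ^ 2 ≤ E ^ 2 * (x * y)) :
    (y + z) ^ 2 ≤ E * ((x + z) * (x + y)) := by
  wlog hzy : z ≤ y generalizing y z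
  · have := this hz hy h₂ h₁ (le_of_not_ge hzy)
    linarith
  have h := one_add_sq_le_of_inv_le (u := z / y) (y := x / y) hE (by positivity)
    ((div_le_one hy).2 hzy) (by positivity) (by
      rw [div_mul_div_comm, ← mul_div_assoc, le_div_iff₀ (by positivity)]; linarith)
  have h' := mul_le_mul_of_nonneg_right h (sq_nonneg y)
  have e₁ : (1 + z / y) ^ 2 * y ^ 2 = (y + z) ^ 2 := by field_simp
  have e₂ : E * ((x / y + z / y) * (x / y + 1)) * y ^ 2 = E * ((x + z) * (x + y)) := by field_simp
  rwa [e₁, e₂] at h'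

/-- One step of the recursion does not expand the balanced region when `d = 2`, edge version. -/
theorem edgeMsg_sq_le {β E : ℝ} (hβ0 : 0 ≤ β) (hβ1 : β < 1) (hE : 7 / 2 ≤ E) {x y z : ℝ}
    (hx : 0 < x) (hy : 0 < y) (hz : 0 < z) (h : x ^ 2 ≤ E ^ 2 * (y * z))
    (h₁ : y ^ 2 ≤ E ^ 2 * (x * z)) (h₂ : z ^ 2 ≤ E ^ 2 * (x * y)) :
    (β * x + y + z) ^ 2 ≤ E * ((β * y + x + z) * (β * z + x + y)) := by
  have h0 := add_sq_le_of_sq_le hE hx hy hz h₁ h₂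
  have hC : 2 * x ≤ E * (y + z) := by
    refine le_of_sq_le_sq ?_ (by positivity)
    nlinarith [sq_nonneg (y - z), mul_nonneg (sq_nonneg E) (sq_nonneg (y - z))]
  have h3 : 0 ≤ (E - 2) * (x * (y + z)) + E * (y ^ 2 + z ^ 2) - x ^ 2 := by
    have h4 : E * (y + z) ^ 2 ≤ 2 * (E * (y ^ 2 + z ^ 2)) := by
      nlinarith [mul_nonneg (by linarith : 0 ≤ E) (sq_nonneg (y - z))]
    have h5 : 2 * x * (y + z) ≤ E * (y + z) * (y + z) := by gcongr
    have h6 : 2 * x * x ≤ E * (y + z) * x := by gcongr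
    have h7 : 0 < x * (y + z) := by positivity
    nlinarith
  have h4 : 0 ≤ β * ((1 - β) * ((E - 2) * (x * (y + z)) + E * (y ^ 2 + z ^ 2)) +
      β * ((E - 2) * (x * (y + z)) + E * (y ^ 2 + z ^ 2) - x ^ 2 + E * (y * z))) := by
    have : 0 ≤ E - 2 := by linarith
    have : 0 ≤ 1 - β := by linarith
    have : 0 ≤ E := by linarith
    positivity
  nlinarith

theorem nonneg_of_endpoints {lo hi c₀ c₁ B : ℝ} (h₁ : lo ≤ B) (h₂ : B ≤ hi)
    (hlo : 0 ≤ c₀ + c₁ * lo - lo ^ 2) (hhi : 0 ≤ c₀ + c₁ * hi - hi ^ 2) :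
    0 ≤ c₀ + c₁ * B - B ^ 2 := by
  rcases (h₁.trans h₂).eq_or_lt with h | h
  · rwa [show B = lo by linarith]
  · have := sub_nonneg.2 h₁
    have := sub_nonneg.2 h₂
    have h3 : 0 ≤ (hi - B) * (c₀ + c₁ * lo - lo ^ 2) + (B - lo) * (c₀ + c₁ * hi - hi ^ 2) +
      (hi - lo) * ((B - lo) * (hi - B)) := by have := h.le; have := sub_pos.2 h; positivity
    refine nonneg_of_mul_nonneg_right (a := hi - lo) ?_ (sub_pos.2 h)
    nlinarith

theorem four_mul_pow_add_one_le {E : ℝ} (hE : 7 / 2 ≤ E) :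
    4 * E ^ 4 + 1 ≤ 200 / 201 * E * (1 + E ^ 2) ^ 2 := by
  obtain ⟨t, rfl⟩ : ∃ t, E = 7 / 2 + t := ⟨E - 7 / 2, by ring⟩
  have ht : 0 ≤ t := by linarith
  have := pow_nonneg ht 2
  have := pow_nonneg ht 3
  have := pow_nonneg ht 4
  have := pow_nonneg ht 5
  nlinarith

theorem sq_add_mul_sq_add_one_le {E a : ℝ} (hE : 7 / 2 ≤ E) (ha : 0 ≤ a) (haE : a ≤ E) :
    (a ^ 2 + E * a) ^ 2 + 1 ≤ 200 / 201 * E * ((1 + a ^ 2) * (1 + E * a)) := by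
  have hred : ∀ E₀, E₀ ≤ E → 7 ≤ E + E₀ →
      (a ^ 2 + E₀ * a) ^ 2 + 1 ≤ 200 / 201 * E₀ * ((1 + a ^ 2) * (1 + E₀ * a)) →
      (a ^ 2 + E * a) ^ 2 + 1 ≤ 200 / 201 * E * ((1 + a ^ 2) * (1 + E * a)) := by
    intro E₀ h1 h2 h3
    have hc2 : 0 ≤ a * (200 / 201 * (a ^ 2 + 1) - a) :=
      mul_nonneg ha (by nlinarith [sq_nonneg (a - 1 / 2)])
    have h4 : 0 ≤ 7 * (a * (200 / 201 * (a ^ 2 + 1) - a)) + (200 / 201 * (1 + a ^ 2) - 2 * a ^ 3) := by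
      have : 0 ≤ a * ((1400 / 201 - 2) * a ^ 2 - 1207 / 201 * a + 1400 / 201) :=
        mul_nonneg ha (by nlinarith [sq_nonneg (a - 3 / 5)])
      nlinarith
    have h5 : 0 ≤ (E - E₀) * (a * (200 / 201 * (a ^ 2 + 1) - a) * (E + E₀) +
        (200 / 201 * (1 + a ^ 2) - 2 * a ^ 3)) := by
      refine mul_nonneg (by linarith) ?_
      nlinarith [mul_nonneg hc2 (sub_nonneg.2 h2)]
    nlinarith
  rcases le_total a (7 / 2) with h | h
  · refine hred (7 / 2) hE (by linarith) ?_
    have h1 : 0 ≤ a ^ 3 * (7 / 2 - a) := mul_nonneg (pow_nonneg ha 3) (by linarith)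
    have h2 : 0 ≤ a * (168 / 100 * a ^ 2 - 877 / 100 * a + 1218 / 100) :=
      mul_nonneg ha (by nlinarith [sq_nonneg (a - 877 / 336)])
    nlinarith [pow_nonneg ha 3, pow_nonneg ha 2]
  · refine hred a haE (by linarith) ?_
    have := four_mul_pow_add_one_le h
    nlinarith

theorem add_sq_add_one_le {E A B : ℝ} (hE : 7 / 2 ≤ E) (hA : 0 < A) (hB : 0 < B)
    (h₁ : A ^ 2 ≤ E ^ 2 * B) (h₂ : B ^ 2 ≤ E ^ 2 * A) :
    (A + B) ^ 2 + 1 ≤ 200 / 201 * E * ((1 + A) * (1 + B)) := by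
  wlog hAB : A ≤ B generalizing A B
  · have := this hB hA h₂ h₁ (le_of_not_ge hAB)
    linarith
  obtain ⟨a, ha, rfl⟩ : ∃ a : ℝ, 0 ≤ a ∧ A = a ^ 2 :=
    ⟨_, Real.sqrt_nonneg _, (Real.sq_sqrt hA.le).symm⟩
  have hE0 : 0 < E := by linarith
  have hBa : B ≤ E * a := by
    refine le_of_sq_le_sq ?_ (by positivity)
    rw [mul_pow]; exact h₂
  have ha0 : 0 < a := by
    rcases ha.eq_or_lt with h | h
    · rw [← h] at hA; norm_num at hA
    · exact h
  have haE : a ≤ E := by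
    have : a * a ≤ E * a := by linarith
    exact le_of_mul_le_mul_right this ha0
  have hlo : 4 * (a ^ 2) ^ 2 + 1 ≤ 200 / 201 * E * (1 + a ^ 2) ^ 2 := by
    have h4 := four_mul_pow_add_one_le hE
    have haE2 : a ^ 2 ≤ E ^ 2 := by gcongr
    rcases le_total (200 / 201 * E) 4 with hK | hK
    · have hx : 0 ≤ a ^ 2 := by positivity
      have hy : 0 < E ^ 2 := by positivity
      have h5 : 0 ≤ (E ^ 2 - a ^ 2) * (200 / 201 * E - 1) + a ^ 2 *
          (200 / 201 * E * (1 + E ^ 2) ^ 2 - (4 * E ^ 4 + 1)) +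
          (4 - 200 / 201 * E) * (E ^ 2 * a ^ 2 * (E ^ 2 - a ^ 2)) := by
        have := sub_nonneg.2 haE2
        have := sub_nonneg.2 h4
        have := sub_nonneg.2 hK
        have : 0 ≤ 200 / 201 * E - 1 := by linarith
        positivity
      have h6 : 0 ≤ E ^ 2 * (200 / 201 * E * (1 + a ^ 2) ^ 2 - (4 * (a ^ 2) ^ 2 + 1)) := by
        nlinarith
      have := nonneg_of_mul_nonneg_right h6 hy
      linarith
    · have h5 : 4 * (1 + a ^ 2) ^ 2 ≤ 200 / 201 * E * (1 + a ^ 2) ^ 2 := by gcongr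
      nlinarith [sq_nonneg a]
  have hhi := sq_add_mul_sq_add_one_le hE ha haE
  have := nonneg_of_endpoints (c₀ := 200 / 201 * E * (1 + a ^ 2) - a ^ 4 - 1)
    (c₁ := 200 / 201 * E * (1 + a ^ 2) - 2 * a ^ 2) hAB hBa (by nlinarith) (by nlinarith)
  nlinarith

theorem edgeMsg_sq_le_of_two {β E : ℝ} (hβ0 : 0 ≤ β) (hβ1 : β < 1) (hE : 7 / 2 ≤ E) {x y z : ℝ}
    (hx : 0 < x) (hy : 0 < y) (hz : 0 < z)
    (h₁ : y ^ 2 ≤ E ^ 2 * (x * z)) (h₂ : z ^ 2 ≤ E ^ 2 * (x * y)) :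
    (β * x + y + z) ^ 2 ≤ 200 / 201 * E * ((β * y + x + z) * (β * z + x + y)) := by
  have h := add_sq_add_one_le (A := y / x) (B := z / x) hE (by positivity) (by positivity)
    (by rw [div_pow, ← mul_div_assoc, div_le_div_iff₀ (by positivity) hx]; nlinarith)
    (by rw [div_pow, ← mul_div_assoc, div_le_div_iff₀ (by positivity) hx]; nlinarith)
  have h' := mul_le_mul_of_nonneg_right h (sq_nonneg x)
  have e₁ : ((y / x + z / x) ^ 2 + 1) * x ^ 2 = (y + z) ^ 2 + x ^ 2 := by field_simp
  have e₂ : 200 / 201 * E * ((1 + y / x) * (1 + z / x)) * x ^ 2 =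
    200 / 201 * E * ((x + y) * (x + z)) := by field_simp
  rw [e₁, e₂] at h'
  have h3 : 0 ≤ β * ((200 / 201 * E - 2) * (x * (y + z)) + 200 / 201 * E * (y ^ 2 + z ^ 2)) := by
    have : 0 ≤ 200 / 201 * E - 2 := by linarith
    have : 0 ≤ E := by linarith
    positivity
  have h4 : 0 ≤ β ^ 2 * (200 / 201 * E * (y * z)) := by
    have : 0 ≤ E := by linarith
    positivity
  have h5 : β ^ 2 * x ^ 2 ≤ x ^ 2 := mul_le_of_le_one_left (sq_nonneg x) (by nlinarith)
  nlinarith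

theorem isBalanced_two_step_binary {β E : ℝ} (hβ0 : 0 < β) (hβ1 : β < 1) (hE : 7 / 2 ≤ E)
    {q : Fin 2 → Fin 2 → Fin 3 → ℝ} (hq : ∀ a b, IsBalanced E (q a b)) :
    IsBalanced (200 / 201 * E) (treeStep β fun a => treeStep β (q a)) := by
  have h : ∀ a, IsBalanced E (treeStep β (q a)) := fun a =>
    isBalanced_treeStep hβ0 (fun b c => ((hq a b).1 c).le) (fun b => ⟨0, (hq a b).1 0⟩) le_rfl
      fun b i j k hij hjk hik => by
        rw [edgeMsg_eq β _ hij hjk hik, edgeMsg_eq β _ hij.symm hik hjk,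
          edgeMsg_eq β _ hik.symm hij hjk.symm]
        exact edgeMsg_sq_le hβ0.le hβ1 hE ((hq a b).1 i) ((hq a b).1 j) ((hq a b).1 k)
          ((hq a b).2 i j k hij hjk hik) ((hq a b).2 j i k hij.symm hik hjk)
          ((hq a b).2 k i j hik.symm hij hjk.symm)
  refine isBalanced_treeStep hβ0 (fun b c => ((h b).1 c).le) (fun b => ⟨0, (h b).1 0⟩) le_rfl
    fun b i j k hij hjk hik => ?_
  rw [edgeMsg_eq β _ hij hjk hik, edgeMsg_eq β _ hij.symm hik hjk,
    edgeMsg_eq β _ hik.symm hij hjk.symm]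
  exact edgeMsg_sq_le_of_two hβ0.le hβ1 hE ((h b).1 i) ((h b).1 j) ((h b).1 k)
    ((h b).2 j i k hij.symm hik hjk) ((h b).2 k i j hik.symm hij hjk.symm)

theorem pow_le_exp_of_sq_le {R c : ℝ} {d : ℕ} (hR : 0 < R) (hc : 0 ≤ c)
    (h : (d : ℝ) ^ 2 * (R + 1 / R - 2) ≤ c ^ 2) : R ^ d ≤ Real.exp c := by
  rw [← Real.log_le_iff_le_exp (by positivity), Real.log_pow]
  refine le_of_sq_le_sq ?_ hc
  rw [mul_pow]
  exact (mul_le_mul_of_nonneg_left (log_sq_le hR) (sq_nonneg _)).trans h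

theorem one_div_pow_le {d : ℕ} {β : ℝ} (hd : 3 ≤ d) (hβ : 1 - 3 / ((d : ℝ) + 1) ≤ β) :
    (1 / β) ^ d ≤ 64 := by
  have hd' : (3 : ℝ) ≤ d := by exact_mod_cast hd
  have hd2 : 0 < (d : ℝ) - 2 := by linarith
  have hβ' : ((d : ℝ) - 2) / (d + 1) ≤ β := by
    refine le_trans (le_of_eq ?_) hβ
    field_simp; ring
  have hpos : 0 < ((d : ℝ) - 2) / (d + 1) := by positivity
  have hle : (1 / β) ^ d ≤ (((d : ℝ) + 1) / (d - 2)) ^ d := by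
    have := hpos.trans_le hβ'
    refine pow_le_pow_left₀ (by positivity) ?_ d
    rw [div_le_div_iff₀ this hd2]
    rw [div_le_iff₀ (by positivity)] at hβ'
    linarith
  refine hle.trans ?_
  rcases hd.eq_or_lt with rfl | h4
  · norm_num
  · have h4' : (4 : ℝ) ≤ d := by exact_mod_cast h4
    refine (pow_le_exp_of_sq_le (c := 4) (by positivity) (by norm_num) ?_).trans ?_
    · rw [show ((d : ℝ) + 1) / (d - 2) + 1 / (((d : ℝ) + 1) / (d - 2)) - 2 =
        9 / ((d - 2) * (d + 1)) by field_simp; ring, ← mul_div_assoc, div_le_iff₀ (by positivity)]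
      nlinarith
    · rw [← Real.le_log_iff_exp_le (by norm_num), show (64 : ℝ) = 2 ^ 6 by norm_num, Real.log_pow]
      have := Real.log_two_gt_d9
      push_cast
      linarith

theorem four_div_sq_pow_le {d : ℕ} {β : ℝ} (hd : 3 ≤ d) (hβ : 1 - 3 / ((d : ℝ) + 1) ≤ β) :
    (4 / (1 + β) ^ 2) ^ d ≤ (9 / 2) ^ 2 := by
  have hd' : (3 : ℝ) ≤ d := by exact_mod_cast hd
  have hd1 : 0 < 2 * (d : ℝ) - 1 := by linarith
  have hβ' : (2 * (d : ℝ) - 1) / (d + 1) ≤ 1 + β := by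
    refine le_trans (le_of_eq ?_) (add_le_add_right hβ 1)
    field_simp; ring
  have hpos : 0 < (2 * (d : ℝ) - 1) / (d + 1) := by positivity
  have h1β := hpos.trans_le hβ'
  have hle : (2 / (1 + β)) ^ d ≤ ((2 * (d : ℝ) + 2) / (2 * d - 1)) ^ d := by
    refine pow_le_pow_left₀ (by positivity) ?_ d
    rw [div_le_div_iff₀ h1β hd1]
    rw [div_le_iff₀ (by positivity)] at hβ'
    linarith
  have h : (2 / (1 + β)) ^ d ≤ 9 / 2 := by
    refine hle.trans ((pow_le_exp_of_sq_le (c := 3 / 2) (by positivity) (by norm_num) ?_).trans ?_)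
    · rw [show (2 * (d : ℝ) + 2) / (2 * d - 1) + 1 / ((2 * (d : ℝ) + 2) / (2 * d - 1)) - 2 =
        9 / ((2 * d - 1) * (2 * d + 2)) by field_simp; ring, ← mul_div_assoc,
        div_le_iff₀ (by positivity)]
      nlinarith
    · refine le_of_sq_le_sq ?_ (by norm_num)
      rw [← Real.exp_nat_mul, show ((2 : ℕ) : ℝ) * (3 / 2) = ((3 : ℕ) : ℝ) * 1 by norm_num,
        Real.exp_nat_mul]
      have := Real.exp_one_lt_d9
      calc Real.exp 1 ^ 3 ≤ 2.7182818286 ^ 3 := by gcongr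
        _ ≤ (9 / 2) ^ 2 := by norm_num
  rw [show (4 / (1 + β) ^ 2) = (2 / (1 + β)) ^ 2 by rw [div_pow]; norm_num, ← pow_mul, mul_comm,
    pow_mul]
  exact pow_le_pow_left₀ (by positivity) h 2

theorem sub_sq_le_of_sq_le {A B : ℝ} (hA : 0 < A) (hB : 0 < B) (h₁ : A ^ 2 ≤ 64 * B)
    (h₂ : B ^ 2 ≤ 64 * A) : (B - A) ^ 2 ≤ 15 / 2 * (A + B) := by
  wlog hAB : A ≤ B generalizing A B
  · have := this hB hA h₂ h₁ (le_of_not_ge hAB)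
    linarith
  obtain ⟨z, rfl⟩ : ∃ z, B = 64 * z := ⟨B / 64, by ring⟩
  have hz0 : 0 < z := by linarith
  have hz1 : z ≤ 1 := by nlinarith
  have h3 : 64 * z ^ 2 ≤ A := by linarith
  have h4 : (64 * z - A) ^ 2 ≤ (64 * z - 64 * z ^ 2) ^ 2 := by
    have := sub_nonneg.2 hAB
    gcongr
  have h5 : 0 ≤ z * ((z - 28 / 100) ^ 2 * (1229 / 100 - 854 / 100 * z)) :=
    mul_nonneg hz0.le (mul_nonneg (sq_nonneg _) (by linarith))
  nlinarith [pow_pos hz0 2, pow_pos hz0 3]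

theorem edgeMsg_sq_le_of_quarter_le {β x y z : ℝ} (hβ : 1 / 4 ≤ β) (hβ1 : β < 1) (hx : 0 < x)
    (hy : 0 < y) (hz : 0 < z) (h₁ : y ^ 2 ≤ 64 * (x * z)) (h₂ : z ^ 2 ≤ 64 * (x * y)) :
    (β * x + y + z) ^ 2 ≤ 4 / (1 + β) ^ 2 * ((β * y + x + z) * (β * z + x + y)) := by
  have h := sub_sq_le_of_sq_le (A := y / x) (B := z / x) (by positivity) (by positivity)
    (by rw [div_pow, ← mul_div_assoc, div_le_div_iff₀ (by positivity) hx]; nlinarith)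
    (by rw [div_pow, ← mul_div_assoc, div_le_div_iff₀ (by positivity) hx]; nlinarith)
  have h' := mul_le_mul_of_nonneg_right h (sq_nonneg x)
  have e₁ : (z / x - y / x) ^ 2 * x ^ 2 = (z - y) ^ 2 := by field_simp
  have e₂ : 15 / 2 * (y / x + z / x) * x ^ 2 = 15 / 2 * ((y + z) * x) := by field_simp
  rw [e₁, e₂] at h'
  have hS : 0 < (y + z) * x := by positivity
  have h3 : (1 - β) * (z - y) ^ 2 ≤
      (2 + β) * ((2 + β + β ^ 2) * x ^ 2 + 2 * (1 + β) * ((y + z) * x)) := by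
    have h4 : (1 - β) * (z - y) ^ 2 ≤ 3 / 4 * (15 / 2 * ((y + z) * x)) := by
      have := sub_pos.2 hβ1
      gcongr
      linarith
    have h5 : (9 / 4) * (5 / 2) * ((y + z) * x) ≤ (2 + β) * (2 * (1 + β)) * ((y + z) * x) := by
      gcongr <;> linarith
    have h6 : 0 ≤ (2 + β) * ((2 + β + β ^ 2) * x ^ 2) := by positivity
    nlinarith
  rw [div_mul_eq_mul_div, le_div_iff₀ (by positivity)]
  have h4 := mul_le_mul_of_nonneg_left h3 (sub_nonneg.2 hβ1.le)
  linear_combination h4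

/-- After one step from arbitrary weights the entries are comparable. -/
theorem isBalanced_treeStep_of_nonneg {d : ℕ} {β E : ℝ} (hβ0 : 0 < β) (hβ1 : β < 1)
    (hE : (1 / β) ^ d ≤ E ^ 2) {P : Fin d → Fin 3 → ℝ} (hnn : ∀ j c, 0 ≤ P j c)
    (hpos : ∀ j, ∃ c, 0 < P j c) : IsBalanced E (treeStep β P) := by
  refine isBalanced_treeStep hβ0 hnn hpos hE fun a i j k hij hjk hik => ?_
  rw [edgeMsg_eq β _ hij hjk hik, edgeMsg_eq β _ hij.symm hik hjk,
    edgeMsg_eq β _ hik.symm hij hjk.symm, div_mul_eq_mul_div, one_mul, le_div_iff₀ hβ0]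
  have hx := hnn a i
  have hy := hnn a j
  have hz := hnn a k
  have hb := sub_pos.2 hβ1
  have : 0 ≤ (1 - β) * ((1 + β + β ^ 2) * (P a i) ^ 2 + (1 + 2 * β) * (P a i * (P a j + P a k)) +
      (1 - β) * (P a j * P a k)) := by positivity
  linear_combination this

theorem isBalanced_two_step_of_nonneg {d : ℕ} {β : ℝ} (hd : 3 ≤ d)
    (hβ : 1 - 3 / ((d : ℝ) + 1) ≤ β) (hβ1 : β < 1) {q : Fin d → Fin d → Fin 3 → ℝ}
    (hnn : ∀ a b c, 0 ≤ q a b c) (hpos : ∀ a b, ∃ c, 0 < q a b c) :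
    IsBalanced (9 / 2) (treeStep β fun a => treeStep β (q a)) := by
  have hβ4 : 1 / 4 ≤ β := by
    have hd' : (3 : ℝ) ≤ d := by exact_mod_cast hd
    have : 3 / ((d : ℝ) + 1) ≤ 3 / 4 := by gcongr; linarith
    linarith
  have hβ0 : 0 < β := by linarith
  have h : ∀ a, IsBalanced 8 (treeStep β (q a)) := fun a =>
    isBalanced_treeStep_of_nonneg hβ0 hβ1 ((one_div_pow_le hd hβ).trans (by norm_num)) (hnn a)
      (hpos a)
  refine isBalanced_treeStep hβ0 (fun a c => ((h a).1 c).le) (fun a => ⟨0, (h a).1 0⟩)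
    (four_div_sq_pow_le hd hβ) fun a i j k hij hjk hik => ?_
  rw [edgeMsg_eq β _ hij hjk hik, edgeMsg_eq β _ hij.symm hik hjk,
    edgeMsg_eq β _ hik.symm hij hjk.symm]
  have h₁ := (h a).2 j i k hij.symm hik hjk
  have h₂ := (h a).2 k i j hik.symm hij hjk.symm
  norm_num at h₁ h₂
  exact edgeMsg_sq_le_of_quarter_le hβ4 hβ1 ((h a).1 i) ((h a).1 j) ((h a).1 k) h₁ h₂

/-- The marginal weights that can occur at the root of a tree of height `n` with fixed leaves. -/
def levelSet (d : ℕ) (β : ℝ) : ℕ → Set (Fin 3 → ℝ)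
  | 0 => {p | ∃ c, p = Pi.single c 1}
  | n + 1 => {p | ∃ P : Fin d → Fin 3 → ℝ, (∀ j, P j ∈ levelSet d β n) ∧ p = treeStep β P}

theorem nonneg_of_mem_levelSet {d : ℕ} {β : ℝ} (hβ0 : 0 < β) {n : ℕ} {p : Fin 3 → ℝ}
    (hp : p ∈ levelSet d β n) : (∀ c, 0 ≤ p c) ∧ ∃ c, 0 < p c := by
  induction n generalizing p with
  | zero =>
    obtain ⟨c, rfl⟩ := hp
    refine ⟨fun c' => ?_, c, by simp⟩
    exact (Pi.single_nonneg.2 zero_le_one : (0 : Fin 3 → ℝ) ≤ Pi.single c 1) c'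
  | succ n ih =>
    obtain ⟨P, hP, rfl⟩ := hp
    have : ∀ c, 0 < treeStep β P c := fun c => Finset.prod_pos fun j _ =>
      edgeMsg_pos hβ0 (ih (hP j)).1 (ih (hP j)).2 c
    exact ⟨fun c => (this c).le, 0, this 0⟩

/-- The contraction, on the logarithmic scale, achieved by two levels of the tree. -/
noncomputable def contr (β a : ℝ) : ℝ :=
  max (-logMap β (-logMap β a)) (a - Real.log (201 / 200))

theorem continuous_contr {β : ℝ} (hβ0 : 0 ≤ β) (hβ1 : β < 1) : Continuous (contr β) := by
  have h := continuous_logMap hβ0 hβ1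
  exact (h.comp h.neg).neg.max (continuous_id.sub continuous_const)

theorem contr_lt {β a : ℝ} (hβ0 : 0 < β) (hβ1 : β < 1) (ha : 0 < a) : contr β a < a := by
  refine max_lt (neg_logMap_neg_logMap_lt hβ0 hβ1 ha) ?_
  have : 0 < Real.log (201 / 200) := Real.log_pos (by norm_num)
  linarith

theorem contr_nonneg {β a : ℝ} (hβ0 : 0 < β) (hβ1 : β < 1) (ha : 0 ≤ a) : 0 ≤ contr β a := by
  refine le_max_of_le_left ?_
  have h1 := logMap_nonneg hβ0.le hβ1 ha
  have h2 := (strictMono_logMap hβ0.le hβ1).monotone (neg_nonpos.2 h1)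
  rw [logMap_zero] at h2
  linarith

theorem contr_le {β a : ℝ} (hβ0 : 0 < β) (hβ1 : β < 1) (ha : 0 ≤ a) : contr β a ≤ a := by
  rcases ha.eq_or_lt with rfl | h
  · have : 0 < Real.log (201 / 200) := Real.log_pos (by norm_num)
    refine max_le ?_ (by linarith)
    simp [logMap_zero]
  · exact (contr_lt hβ0 hβ1 h).le

theorem isBalanced_contr {d : ℕ} {β a : ℝ} (hβ0 : 0 < β) (hβ1 : β < 1)
    (hd : (d : ℝ) * (1 - β) ≤ 2 + β) (ha : 0 ≤ a)
    (h : d = 2 ∨ 1 / 4 ≤ β ∧ Real.exp a ≤ 9 / 2) {q : Fin d → Fin d → Fin 3 → ℝ}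
    (hq : ∀ i j, IsBalanced (Real.exp a) (q i j)) :
    IsBalanced (Real.exp (contr β a)) (treeStep β fun i => treeStep β (q i)) := by
  have hE := Real.one_le_exp ha
  have he : 200 / 201 * Real.exp a = Real.exp (a - Real.log (201 / 200)) := by
    rw [Real.exp_sub, Real.exp_log (by norm_num)]; ring
  by_cases h1 : Real.exp a ≤ 2 + 2 * β
  · have := isBalanced_two_step_small hβ0 hβ1 hd hE h1 hq
    rw [Real.log_exp] at this
    exact this.mono (Real.exp_pos _).le (Real.exp_le_exp.2 (le_max_left _ _))
  · suffices IsBalanced (200 / 201 * Real.exp a) (treeStep β fun i => treeStep β (q i)) by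
      rw [he] at this
      exact this.mono (Real.exp_pos _).le (Real.exp_le_exp.2 (le_max_right _ _))
    rcases le_total (Real.exp a) (7 / 2) with h2 | h2
    · exact isBalanced_two_step_crude hβ0 hβ1 hd (le_of_not_ge h1) (Or.inl h2) hq
    · rcases h with rfl | h
      · exact isBalanced_two_step_binary hβ0 hβ1 h2 hq
      · exact isBalanced_two_step_crude hβ0 hβ1 hd (le_of_not_ge h1) (Or.inr h) hq

theorem tendsto_iterate_contr {β a : ℝ} (hβ0 : 0 < β) (hβ1 : β < 1) (ha : 0 ≤ a) :
    Filter.Tendsto (fun k => (contr β)^[k] a) Filter.atTop (nhds 0) := by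
  have hnn : ∀ k, 0 ≤ (contr β)^[k] a := by
    intro k
    induction k with
    | zero => exact ha
    | succ k ih => rw [Function.iterate_succ_apply']; exact contr_nonneg hβ0 hβ1 ih
  have hanti : Antitone fun k => (contr β)^[k] a := antitone_nat_of_succ_le fun k => by
    rw [Function.iterate_succ_apply']; exact contr_le hβ0 hβ1 (hnn k)
  have hlim := tendsto_atTop_ciInf hanti ⟨0, by rintro _ ⟨k, rfl⟩; exact hnn k⟩
  have hfix := isFixedPt_of_tendsto_iterate hlim
    (continuous_contr hβ0.le hβ1).continuousAt
  have h0 : 0 ≤ ⨅ k, (contr β)^[k] a := le_ciInf hnn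
  rcases h0.eq_or_lt with h | h
  · rw [← h] at hlim; exact hlim
  · exact absurd hfix (contr_lt hβ0 hβ1 h).ne

/-- The balanced region eventually shrinks to a point. -/
theorem eventually_isBalanced_exp {d : ℕ} {β : ℝ}
    (h : (d = 2 ∧ 0 < β ∧ β < 1) ∨ (3 ≤ d ∧ 1 - 3 / ((d : ℝ) + 1) ≤ β ∧ β < 1))
    {ε : ℝ} (hε : 0 < ε) :
    ∀ᶠ n in Filter.atTop, ∀ p ∈ levelSet d β n, IsBalanced (Real.exp ε) p := by
  have hβ1 : β < 1 := by rcases h with h | h <;> exact h.2.2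
  have hβ0 : 0 < β := by
    rcases h with h | h
    · exact h.2.1
    · have hd' : (3 : ℝ) ≤ d := by exact_mod_cast h.1
      have : 3 / ((d : ℝ) + 1) ≤ 3 / 4 := by gcongr; linarith
      linarith [h.2.1]
  have hd : (d : ℝ) * (1 - β) ≤ 2 + β := by
    rcases h with ⟨rfl, h⟩ | ⟨h3, h, -⟩
    · push_cast; linarith
    · rw [sub_le_comm, le_div_iff₀ (by positivity)] at h
      linarith
  obtain ⟨a, ha, hcase, hbase⟩ : ∃ a, 0 ≤ a ∧ (d = 2 ∨ 1 / 4 ≤ β ∧ Real.exp a ≤ 9 / 2) ∧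
      ∀ n, ∀ p ∈ levelSet d β (n + 2), IsBalanced (Real.exp a) p := by
    rcases h with ⟨rfl, -, -⟩ | ⟨h3, h, -⟩
    · have hE : 1 ≤ 1 / β := (one_le_div hβ0).2 hβ1.le
      refine ⟨Real.log (1 / β), Real.log_nonneg hE, Or.inl rfl, ?_⟩
      rintro n _ ⟨P, hP, rfl⟩
      rw [Real.exp_log (by positivity)]
      exact isBalanced_treeStep_of_nonneg hβ0 hβ1 le_rfl
        (fun j => (nonneg_of_mem_levelSet hβ0 (hP j)).1)
        (fun j => (nonneg_of_mem_levelSet hβ0 (hP j)).2)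
    · refine ⟨Real.log (9 / 2), Real.log_nonneg (by norm_num), Or.inr ⟨?_, ?_⟩, ?_⟩
      · have hd' : (3 : ℝ) ≤ d := by exact_mod_cast h3
        have : 3 / ((d : ℝ) + 1) ≤ 3 / 4 := by gcongr; linarith
        linarith
      · rw [Real.exp_log (by norm_num)]
      · rintro n _ ⟨P, hP, rfl⟩
        choose q hq hPq using hP
        obtain rfl : P = fun j => treeStep β (q j) := funext hPq
        rw [Real.exp_log (by norm_num)]
        exact isBalanced_two_step_of_nonneg h3 h hβ1
          (fun i j => (nonneg_of_mem_levelSet hβ0 (hq i j)).1)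
          (fun i j => (nonneg_of_mem_levelSet hβ0 (hq i j)).2)
  have hiter : ∀ k, (0 ≤ (contr β)^[k] a ∧ (contr β)^[k] a ≤ a) ∧
      ∀ n, ∀ p ∈ levelSet d β (n + 2 + 2 * k), IsBalanced (Real.exp ((contr β)^[k] a)) p := by
    intro k
    induction k with
    | zero => exact ⟨⟨ha, le_rfl⟩, hbase⟩
    | succ k ih =>
      obtain ⟨⟨h0, h1⟩, hk⟩ := ih
      rw [Function.iterate_succ_apply']
      refine ⟨⟨contr_nonneg hβ0 hβ1 h0, (contr_le hβ0 hβ1 h0).trans h1⟩, ?_⟩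
      rintro n _ ⟨P, hP, rfl⟩
      choose q hq hPq using hP
      obtain rfl : P = fun j => treeStep β (q j) := funext hPq
      refine isBalanced_contr hβ0 hβ1 hd h0 ?_ fun i j => hk n _ (hq i j)
      exact hcase.imp_right fun hc => ⟨hc.1, (Real.exp_le_exp.2 h1).trans hc.2⟩
  obtain ⟨k, hk⟩ := ((tendsto_iterate_contr hβ0 hβ1 ha).eventually (gt_mem_nhds hε)).exists
  filter_upwards [Filter.eventually_ge_atTop (2 + 2 * k)] with n hn p hp
  obtain ⟨m, rfl⟩ := Nat.exists_eq_add_of_le hn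
  refine ((hiter k).2 m p ?_).mono (Real.exp_pos _).le (Real.exp_le_exp.2 hk.le)
  rwa [show m + 2 + 2 * k = 2 + 2 * k + m by ring]

/-- Vertices of the `d`-ary tree of height `n`. -/
abbrev TreeVertex (d n : ℕ) : Type := Σ k : Fin (n + 1), (Fin k → Fin d)

/-- The root of the tree. -/
def treeRoot (d n : ℕ) : TreeVertex d n := ⟨⟨0, n.succ_pos⟩, Fin.elim0⟩

/-- The leaf at the end of a path. -/
def treeLeaf {d n : ℕ} (f : Fin n → Fin d) : TreeVertex d n := ⟨⟨n, n.lt_succ_self⟩, f⟩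

/-- The vertex of the `j`-th principal subtree, as a vertex of the whole tree. -/
def subtreeVertex {d n : ℕ} (j : Fin d) (v : TreeVertex d n) : TreeVertex d (n + 1) :=
  ⟨v.1.succ, (Fin.cons j v.2 : Fin (v.1 + 1) → Fin d)⟩

/-- A colour of the root together with colourings of the principal subtrees. -/
def graft {d n : ℕ} (c : Fin 3) (s : Fin d → TreeVertex d n → Fin 3) :
    TreeVertex d (n + 1) → Fin 3 := fun v =>
  Fin.cases (motive := fun k => (Fin k → Fin d) → Fin 3) (fun _ => c)
    (fun k (f : Fin (k + 1) → Fin d) => s (f 0) ⟨k, Fin.tail f⟩) v.1 v.2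

theorem graft_treeRoot {d n : ℕ} (c : Fin 3) (s : Fin d → TreeVertex d n → Fin 3) :
    graft c s (treeRoot d (n + 1)) = c := rfl

theorem graft_treeLeaf {d n : ℕ} (c : Fin 3) (s : Fin d → TreeVertex d n → Fin 3)
    (f : Fin (n + 1) → Fin d) : graft c s (treeLeaf f) = s (f 0) (treeLeaf (Fin.tail f)) := rfl

theorem graft_restrict {d n : ℕ} (σ : TreeVertex d (n + 1) → Fin 3) :
    graft (σ (treeRoot d (n + 1))) (fun j v => σ (subtreeVertex j v)) = σ := by
  funext ⟨k, f⟩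
  induction k using Fin.cases with
  | zero =>
    have : (⟨0, f⟩ : TreeVertex d (n + 1)) = treeRoot d (n + 1) := by
      unfold treeRoot
      congr
      exact Subsingleton.elim (α := Fin 0 → Fin d) _ _
    rw [this]
    rfl
  | succ k =>
    change σ (subtreeVertex (f (0 : Fin (k + 1))) ⟨k, Fin.tail (n := k) f⟩) = σ ⟨k.succ, f⟩
    unfold subtreeVertex
    congr
    exact Fin.cons_self_tail (n := k) f

/-- Colourings of a tree correspond to a colour of the root and colourings of the subtrees. -/
def graftEquiv (d n : ℕ) :
    Fin 3 × (Fin d → TreeVertex d n → Fin 3) ≃ (TreeVertex d (n + 1) → Fin 3) where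
  toFun x := graft x.1 x.2
  invFun σ := (σ (treeRoot d (n + 1)), fun j v => σ (subtreeVertex j v))
  left_inv _ := rfl
  right_inv := graft_restrict

theorem treeWeight_eq_prod {d n : ℕ} (β : ℝ) (σ : TreeVertex d n → Fin 3) :
    treeWeight 3 d n β σ = ∏ k : Fin n, ∏ f : Fin (k + 1) → Fin d,
      if σ ⟨k.succ, f⟩ = σ ⟨k.castSucc, fun i => f i.castSucc⟩ then β else 1 := by
  rw [treeWeight, Finset.card_filter, ← Finset.prod_pow_eq_pow_sum, Fintype.prod_sigma]
  refine Finset.prod_congr rfl fun k _ => Finset.prod_congr rfl fun f _ => ?_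
  split_ifs <;> simp

theorem prod_fin_succ_fun {d m : ℕ} (G : (Fin (m + 1) → Fin d) → ℝ) :
    ∏ f, G f = ∏ j, ∏ g : Fin m → Fin d, G (Fin.cons j g) := by
  rw [← Fintype.prod_prod_type' (f := fun (j : Fin d) (g : Fin m → Fin d) => G (Fin.cons j g))]
  exact (Fintype.prod_equiv (Fin.consEquiv fun _ => Fin d) _ _ fun _ => rfl).symm

theorem treeWeight_graft {d n : ℕ} (β : ℝ) (c : Fin 3) (s : Fin d → TreeVertex d n → Fin 3) :
    treeWeight 3 d (n + 1) β (graft c s) =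
      ∏ j, (if s j (treeRoot d n) = c then β else 1) * treeWeight 3 d n β (s j) := by
  rw [treeWeight_eq_prod, Fin.prod_univ_succ, Finset.prod_mul_distrib]
  congr 1
  · refine (prod_fin_succ_fun (m := 0) _).trans (Finset.prod_congr rfl fun j _ => ?_)
    refine (Fintype.prod_unique (ι := Fin 0 → Fin d) _).trans ?_
    have : graft c s ⟨Fin.succ 0, (Fin.cons j default : Fin 1 → Fin d)⟩ = s j (treeRoot d n) := by
      change s j ⟨0, _⟩ = s j ⟨0, _⟩
      congr 2
    exact if_congr (by rw [← this]; rfl) rfl rfl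
  · simp only [treeWeight_eq_prod]
    rw [Finset.prod_comm]
    refine Finset.prod_congr rfl fun k _ => ?_
    refine (prod_fin_succ_fun (m := k + 1) _).trans ?_
    refine Finset.prod_congr rfl fun j _ => Finset.prod_congr rfl fun f _ => ?_
    refine if_congr ?_ rfl rfl
    rfl

/-- The total weight of the colourings with root colour `c` and leaves coloured by `τ`. -/
noncomputable def rootWeight (d n : ℕ) (β : ℝ) (τ : (Fin n → Fin d) → Fin 3) (c : Fin 3) : ℝ :=
  ∑ σ : TreeVertex d n → Fin 3,
    if σ (treeRoot d n) = c ∧ ∀ f, σ (treeLeaf f) = τ f then treeWeight 3 d n β σ else 0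

theorem rootWeight_zero {d : ℕ} (β : ℝ) (τ : (Fin 0 → Fin d) → Fin 3) :
    rootWeight d 0 β τ = Pi.single (τ Fin.elim0) 1 := by
  funext c
  have hu : ∀ v : TreeVertex d 0, v = treeRoot d 0 := by
    rintro ⟨k, f⟩
    obtain rfl := Subsingleton.elim (α := Fin 1) k 0
    unfold treeRoot
    congr
    exact Subsingleton.elim (α := Fin 0 → Fin d) _ _
  rw [rootWeight, Finset.sum_eq_single (fun _ => c)]
  · have : treeWeight 3 d 0 β (fun _ => c) = 1 := by rw [treeWeight_eq_prod]; simp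
    rw [this]
    by_cases h : c = τ Fin.elim0
    · rw [if_pos ⟨rfl, fun f => by rw [h, Subsingleton.elim f Fin.elim0]⟩, h, Pi.single_eq_same]
    · rw [if_neg fun h' => h (h'.2 Fin.elim0), Pi.single_eq_of_ne h]
  · intro σ _ hσ
    refine if_neg fun h' => hσ (funext fun v => ?_)
    rw [hu v, h'.1]
  · simp

theorem rootWeight_succ {d n : ℕ} (β : ℝ) (τ : (Fin (n + 1) → Fin d) → Fin 3) :
    rootWeight d (n + 1) β τ =
      treeStep β fun j => rootWeight d n β fun f => τ (Fin.cons j f) := by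
  funext c
  have hedge : ∀ j, edgeMsg β (rootWeight d n β fun f => τ (Fin.cons j f)) c =
      ∑ σ : TreeVertex d n → Fin 3, if ∀ f, σ (treeLeaf f) = τ (Fin.cons j f) then
        (if σ (treeRoot d n) = c then β else 1) * treeWeight 3 d n β σ else 0 := by
    intro j
    unfold edgeMsg rootWeight
    rw [Finset.sum_comm, Finset.mul_sum, ← Finset.sum_sub_distrib]
    refine Finset.sum_congr rfl fun σ _ => ?_
    by_cases h : ∀ f, σ (treeLeaf f) = τ (Fin.cons j f)
    · simp only [h, implies_true, and_true, if_true, Finset.sum_ite_eq, Finset.mem_univ]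
      split_ifs <;> ring
    · simp [h]
  unfold treeStep
  simp only [hedge]
  rw [rootWeight, ← (graftEquiv d n).sum_comp, Fintype.sum_prod_type, Finset.prod_univ_sum,
    Fintype.piFinset_univ]
  rw [Finset.sum_eq_single c]
  · refine Finset.sum_congr rfl fun s _ => ?_
    rw [Finset.prod_ite_zero]
    change (if graft c s (treeRoot d (n + 1)) = c ∧ ∀ f, graft c s (treeLeaf f) = τ f then
      treeWeight 3 d (n + 1) β (graft c s) else 0) = _
    have hiff : (graft c s (treeRoot d (n + 1)) = c ∧ ∀ f, graft c s (treeLeaf f) = τ f) ↔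
        ∀ j ∈ Finset.univ, ∀ f, s j (treeLeaf f) = τ (Fin.cons j f) := by
      simp only [graft_treeRoot, graft_treeLeaf, true_and, Finset.mem_univ, true_implies]
      exact ⟨fun h j f => by simpa using h (Fin.cons j f), fun h f => by
        rw [h (f 0) (Fin.tail f), Fin.cons_self_tail]⟩
    by_cases h : ∀ j ∈ Finset.univ, ∀ f, s j (treeLeaf f) = τ (Fin.cons j f)
    · rw [if_pos h, if_pos (hiff.2 h), treeWeight_graft]
    · rw [if_neg h, if_neg (mt hiff.1 h)]
  · intro c' _ hc'
    refine Finset.sum_eq_zero fun s _ => if_neg fun h => hc' h.1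
  · simp

theorem rootWeight_mem_levelSet {d n : ℕ} (β : ℝ) (τ : (Fin n → Fin d) → Fin 3) :
    rootWeight d n β τ ∈ levelSet d β n := by
  induction n with
  | zero => exact ⟨_, rootWeight_zero β τ⟩
  | succ n ih => exact ⟨_, fun j => ih _, rootWeight_succ β τ⟩

theorem condRootProb_eq {d n : ℕ} (β : ℝ) (τ : (Fin n → Fin d) → Fin 3) (c : Fin 3) :
    condRootProb 3 d n β τ c = rootWeight d n β τ c / ∑ c', rootWeight d n β τ c' := by
  rw [condRootProb, Finset.sum_filter, Finset.sum_filter]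
  congr 1
  unfold rootWeight
  rw [Finset.sum_comm]
  refine Finset.sum_congr rfl fun σ _ => ?_
  change (if ∀ f, σ (treeLeaf f) = τ f then treeWeight 3 d n β σ else 0) = _
  by_cases h : ∀ f, σ (treeLeaf f) = τ f <;> simp [h]

theorem condRootProb_div {d n : ℕ} {β : ℝ} (hβ0 : 0 < β) (τ : (Fin n → Fin d) → Fin 3)
    (c₁ c₂ : Fin 3) : condRootProb 3 d n β τ c₁ / condRootProb 3 d n β τ c₂ =
      rootWeight d n β τ c₁ / rootWeight d n β τ c₂ := by
  obtain ⟨h₁, c, hc⟩ := nonneg_of_mem_levelSet hβ0 (rootWeight_mem_levelSet β τ)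
  have : 0 < ∑ c', rootWeight d n β τ c' :=
    Finset.sum_pos' (fun i _ => h₁ i) ⟨c, Finset.mem_univ _, hc⟩
  rw [condRootProb_eq, condRootProb_eq, div_div_div_cancel_right₀ this.ne']

theorem pottsGamma_le {d n : ℕ} {β E : ℝ} (hβ0 : 0 < β) (hE : 1 ≤ E)
    (h : ∀ p ∈ levelSet d β n, IsBalanced E p) : pottsGamma 3 d β n ≤ E ^ 2 := by
  refine ciSup_le fun τ => ciSup_le fun c₁ => ciSup_le fun c₂ => ?_
  have hb := h _ (rootWeight_mem_levelSet β τ)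
  rw [condRootProb_div hβ0, div_le_iff₀ (hb.1 c₂)]
  exact hb.le_mul hE c₁ c₂

theorem one_le_pottsGamma {d n : ℕ} {β E : ℝ} (hβ0 : 0 < β)
    (h : ∀ p ∈ levelSet d β n, IsBalanced E p) : 1 ≤ pottsGamma 3 d β n := by
  have hb := h _ (rootWeight_mem_levelSet β fun _ => 0)
  have h1 : condRootProb 3 d n β (fun _ => 0) 0 / condRootProb 3 d n β (fun _ => 0) 0 = 1 := by
    rw [condRootProb_div hβ0, div_self (hb.1 0).ne']
  rw [← h1]
  refine le_ciSup_of_le (Set.finite_range _).bddAbove (fun _ => 0) ?_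
  refine le_ciSup_of_le (Set.finite_range _).bddAbove 0 ?_
  exact le_ciSup_of_le (Set.finite_range _).bddAbove 0 le_rfl

/-- If `d = 2` and `β ∈ (0,1)`, then `γ(3,β,2,n) → 1` as `n → ∞`.
If `d ≥ 3` and `1 - 3/(d+1) ≤ β < 1`, then `γ(3,β,d,n) → 1` as `n → ∞`. -/
theorem potts_q3_gamma_tendsto_one (d : ℕ) (β : ℝ)
    (h : (d = 2 ∧ 0 < β ∧ β < 1) ∨
      (3 ≤ d ∧ 1 - 3 / ((d : ℝ) + 1) ≤ β ∧ β < 1)) :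
    Filter.Tendsto (pottsGamma 3 d β) Filter.atTop (nhds 1) := by
  have hβ0 : 0 < β := by
    rcases h with h | h
    · exact h.2.1
    · have hd' : (3 : ℝ) ≤ d := by exact_mod_cast h.1
      have : 3 / ((d : ℝ) + 1) ≤ 3 / 4 := by gcongr; linarith
      linarith [h.2.1]
  have hcont : Filter.Tendsto (fun ε : ℝ => Real.exp ε ^ 2) (nhdsWithin 0 (Set.Ioi 0)) (nhds 1) := by
    have : Continuous fun ε : ℝ => Real.exp ε ^ 2 := Real.continuous_exp.pow 2
    simpa using (this.tendsto 0).mono_left nhdsWithin_le_nhds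
  rw [tendsto_order]
  refine ⟨fun x hx => ?_, fun x hx => ?_⟩
  · filter_upwards [eventually_isBalanced_exp h one_pos] with n hn
    exact hx.trans_le (one_le_pottsGamma hβ0 hn)
  · obtain ⟨ε, hεx, hε⟩ := ((hcont.eventually (gt_mem_nhds hx)).and self_mem_nhdsWithin).exists
    filter_upwards [eventually_isBalanced_exp h hε] with n hn
    exact (pottsGamma_le hβ0 (Real.one_le_exp (le_of_lt hε)) hn).trans_lt hεx
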